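/- Let Ω ⊂ R^n be open and f ∈ W^{2,p}_loc(Ω) with 1 ≤ p < ∞. Then there exists an increasing sequence of closed sets C_k ⊂ C_{k+1} ⊂ Ω such that for each k the precise representative f* restricted to C_k is Lipschitz continuous outside a subset of C_k of p-capacity zero, and cap_p(Ω \ ∪_k C_k) = 0. -/

import Mathlib

open MeasureTheory Metric Filter Set
open scoped ENNReal Topology NNReal

noncomputable section

/-- Euclidean space ℝⁿ. -/
abbrev En (n : ℕ) := EuclideanSpace ℝ (Fin n)

variable {n : ℕ}

/-- The average of `f` over the ball `B(x,r)`. -/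
def ballAvg (f : En n → ℝ) (x : En n) (r : ℝ) : ℝ :=
  ⨍ y in Metric.ball x r, f y

open scoped Classical in
/-- The precise representative of `f`: the limit of ball averages where it exists, `0` otherwise. -/
def preciseRep (f : En n → ℝ) (x : En n) : ℝ :=
  if h : ∃ L : ℝ, Tendsto (fun r => ballAvg f x r) (nhdsWithin 0 (Set.Ioi 0)) (nhds L)
  then h.choose else 0

/-- A test function: smooth, compactly supported, with support inside `Ω`. -/
def IsTest (Ω : Set (En n)) (η : En n → ℝ) : Prop :=
  ContDiff ℝ (⊤ : ℕ∞) η ∧ HasCompactSupport η ∧ tsupport η ⊆ Ω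

/-- `g` is the weak partial derivative of `f` in direction `v`, on `Ω`. -/
def HasWeakPartialOn (Ω : Set (En n)) (f g : En n → ℝ) (v : En n) : Prop :=
  ∀ η : En n → ℝ, IsTest Ω η →
    ∫ x, f x * fderiv ℝ η x v = - ∫ x, g x * η x

/-- `g` is the weak gradient of `f` on `Ω`. -/
def HasWeakGradientOn (Ω : Set (En n)) (f : En n → ℝ) (g : En n → En n) : Prop :=
  ∀ i : Fin n, HasWeakPartialOn Ω f (fun x => g x i) (EuclideanSpace.single i 1)

/-- `f ∈ W^{1,p}(ℝⁿ)` with weak gradient `g`. -/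
def MemW1p (p : ℝ) (f : En n → ℝ) (g : En n → En n) : Prop :=
  AEStronglyMeasurable f volume ∧ AEStronglyMeasurable g volume ∧
  HasWeakGradientOn Set.univ f g ∧
  Integrable (fun x => |f x| ^ p) ∧ Integrable (fun x => ‖g x‖ ^ p)

/-- `f ∈ W^{1,p}_loc(Ω)` with weak gradient `g`. -/
def MemW1pLoc (p : ℝ) (Ω : Set (En n)) (f : En n → ℝ) (g : En n → En n) : Prop :=
  AEStronglyMeasurable f volume ∧ AEStronglyMeasurable g volume ∧
  HasWeakGradientOn Ω f g ∧
  ∀ K : Set (En n), K ⊆ Ω → IsCompact K →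
    IntegrableOn (fun x => |f x| ^ p) K ∧ IntegrableOn (fun x => ‖g x‖ ^ p) K

/-- `f ∈ W^{2,p}_loc(Ω)` with weak gradient `g` and weak second derivatives `h`. -/
def MemW2pLoc (p : ℝ) (Ω : Set (En n)) (f : En n → ℝ)
    (g : En n → En n) (h : En n → Fin n → En n) : Prop :=
  AEStronglyMeasurable f volume ∧ AEStronglyMeasurable g volume ∧
  HasWeakGradientOn Ω f g ∧
  (∀ i : Fin n, HasWeakGradientOn Ω (fun x => g x i) (fun x => h x i)) ∧
  ∀ K : Set (En n), K ⊆ Ω → IsCompact K →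
    IntegrableOn (fun x => |f x| ^ p) K ∧ IntegrableOn (fun x => ‖g x‖ ^ p) K ∧
    ∀ i : Fin n, IntegrableOn (fun x => ‖h x i‖ ^ p) K

/-- `f ∈ W^{2,p}(ℝⁿ)` with weak gradient `g` and weak second derivatives `h`. -/
def MemW2p (p : ℝ) (f : En n → ℝ) (g : En n → En n) (h : En n → Fin n → En n) : Prop :=
  AEStronglyMeasurable f volume ∧ AEStronglyMeasurable g volume ∧
  HasWeakGradientOn Set.univ f g ∧
  (∀ i : Fin n, HasWeakGradientOn Set.univ (fun x => g x i) (fun x => h x i)) ∧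
  Integrable (fun x => |f x| ^ p) ∧ Integrable (fun x => ‖g x‖ ^ p) ∧
  ∀ i : Fin n, Integrable (fun x => ‖h x i‖ ^ p)

/-- The `p`-capacity of a compact set. -/
def capK (p : ℝ) (F : Set (En n)) : ℝ≥0∞ :=
  ⨅ (g : En n → ℝ) (_ : ContDiff ℝ (⊤ : ℕ∞) g ∧ HasCompactSupport g ∧ ∀ x ∈ F, 1 ≤ g x),
    ∫⁻ x, (‖fderiv ℝ g x‖₊ : ℝ≥0∞) ^ p

/-- The `p`-capacity of an open set, by inner regularity over compact subsets. -/
def capOpen (p : ℝ) (U : Set (En n)) : ℝ≥0∞ :=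
  ⨆ (F : Set (En n)) (_ : F ⊆ U ∧ IsCompact F), capK p F

/-- The `p`-capacity of an arbitrary set, by outer regularity over open supersets. -/
def cap (p : ℝ) (E : Set (En n)) : ℝ≥0∞ :=
  ⨅ (U : Set (En n)) (_ : E ⊆ U ∧ IsOpen U), capOpen p U

/-- `f` restricted to `s` is Lipschitz outside a subset of `s` of `p`-capacity zero. -/
def LipschitzOnQE (p : ℝ) (f : En n → ℝ) (s : Set (En n)) : Prop :=
  ∃ N : Set (En n), N ⊆ s ∧ cap p N = 0 ∧ ∃ K : ℝ≥0, LipschitzOnWith K f (s \ N)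

/-- The multiplicity function: the number of preimages of `y` in `A` under `φ`. -/
def Nphi (φ : En n → En n) (A : Set (En n)) (y : En n) : ℝ≥0∞ :=
  Measure.count {x ∈ A | φ x = y}

end

/-!
A `C¹` function `u` satisfies `|u x - u y| ≤ 2ⁿ |x - y| (M(Du) x + M(Du) y)`, where `M` is the
Hardy–Littlewood maximal operator, and `M` obeys a capacitary weak type estimate
`cap_p {M u > t} ≤ C t⁻ᵖ ∫ |Du|ᵖ`. After multiplication by a cutoff, `f` and its gradient lie in
`W^{1,p}(ℝⁿ)`; applying the weak type estimate to differences of mollifications of `f` and of each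
`∂ᵢf` shows that, off an open set of small capacity, a subsequence of the mollifications of `f`
converges to `f*` while the maximal functions of their gradients stay bounded. There the pointwise
inequality passes to the limit and makes `f*` Lipschitz.
-/

/-! ### Averages and the Poincaré inequality on convex sets -/

section Average

variable {α : Type*} [MeasurableSpace α] {μ : Measure α}

theorem laverage_rpow_le {F : α → ℝ≥0∞} (hF : AEMeasurable F μ) {p : ℝ} (hp : 1 ≤ p) :
    (⨍⁻ x, F x ∂μ) ^ p ≤ ⨍⁻ x, F x ^ p ∂μ := by
  have hp0 : 0 < p := by linarith
  rcases eq_or_ne μ 0 with rfl | hμ0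
  · simp [hp0]
  by_cases hμ : IsFiniteMeasure μ
  swap
  · simp [laverage, not_isFiniteMeasure_iff.mp hμ, hp0]
  have : NeZero μ := ⟨hμ0⟩
  have hnorm := eLpNorm'_le_eLpNorm'_of_exponent_le (f := F) one_pos hp ((μ univ)⁻¹ • μ)
    (hF.smul_measure _).aestronglyMeasurable
  simp only [eLpNorm', enorm_eq_self, ENNReal.rpow_one, div_one] at hnorm
  rwa [one_div, ENNReal.le_rpow_inv_iff hp0] at hnorm

theorem enorm_average_sub_le {F : Type*} [NormedAddCommGroup F] [NormedSpace ℝ F] [CompleteSpace F]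
    [IsFiniteMeasure μ] [NeZero μ] {v : α → F} (hv : Integrable v μ) (c : F) :
    ‖(⨍ x, v x ∂μ) - c‖ₑ ≤ ⨍⁻ x, ‖v x - c‖ₑ ∂μ := by
  have hsub : (⨍ x, v x ∂μ) - c = ⨍ x, (v x - c) ∂μ := by
    rw [average, average, integral_sub hv.to_average (integrable_const c), integral_const]
    simp
  rw [hsub]
  exact enorm_integral_le_lintegral_enorm _

end Average

theorem enorm_sub_le_lintegral_enorm_fderiv {E F : Type*} [NormedAddCommGroup E] [NormedSpace ℝ E]
    [NormedAddCommGroup F] [NormedSpace ℝ F] [CompleteSpace F]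
    {v : E → F} (hv : ContDiff ℝ 1 v) (x y : E) :
    ‖v y - v x‖ₑ ≤ ‖y - x‖ₑ * ∫⁻ t in Icc (0 : ℝ) 1, ‖fderiv ℝ v ((1 - t) • x + t • y)‖ₑ := by
  have hderiv (t : ℝ) : HasDerivAt (fun t : ℝ => v ((1 - t) • x + t • y))
      (fderiv ℝ v ((1 - t) • x + t • y) (y - x)) t := by
    have hline : HasDerivAt (fun t : ℝ => (1 - t) • x + t • y) (y - x) t :=
      ((((hasDerivAt_id t).const_sub 1).smul_const x).add
        ((hasDerivAt_id t).smul_const y)).congr_deriv (by module)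
    exact (hv.differentiable one_ne_zero _).hasFDerivAt.comp_hasDerivAt t hline
  have hcont : Continuous fun t : ℝ => fderiv ℝ v ((1 - t) • x + t • y) :=
    (hv.continuous_fderiv one_ne_zero).comp (by fun_prop)
  have hftc := intervalIntegral.integral_eq_sub_of_hasDerivAt (a := 0) (b := 1)
    (fun t _ => hderiv t) ((hcont.clm_apply continuous_const).intervalIntegrable _ _)
  simp only [sub_self, zero_smul, one_smul, zero_add, sub_zero, add_zero] at hftc
  rw [← hftc, intervalIntegral.integral_of_le zero_le_one, ← integral_Icc_eq_integral_Ioc,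
    mul_comm, ← lintegral_mul_const'' _ hcont.enorm.aemeasurable]
  exact (enorm_integral_le_lintegral_enorm _).trans
    (lintegral_mono fun t => ContinuousLinearMap.le_opENorm _ _)

theorem enorm_sub_rpow_le_lintegral_enorm_fderiv_rpow {E F : Type*} [NormedAddCommGroup E]
    [NormedSpace ℝ E] [NormedAddCommGroup F] [NormedSpace ℝ F] [CompleteSpace F]
    {v : E → F} (hv : ContDiff ℝ 1 v) {p : ℝ} (hp : 1 ≤ p) (x y : E) :
    ‖v y - v x‖ₑ ^ p ≤
      ‖y - x‖ₑ ^ p * ∫⁻ t in Icc (0 : ℝ) 1, ‖fderiv ℝ v ((1 - t) • x + t • y)‖ₑ ^ p := by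
  have hp0 : 0 ≤ p := by linarith
  have hcont : Continuous fun t : ℝ => ‖fderiv ℝ v ((1 - t) • x + t • y)‖ₑ :=
    ((hv.continuous_fderiv one_ne_zero).comp (by fun_prop)).enorm
  have hjensen := laverage_rpow_le (μ := volume.restrict (Icc (0 : ℝ) 1))
    hcont.aemeasurable hp
  simp only [setLAverage_eq, Real.volume_Icc, sub_zero, ENNReal.ofReal_one, div_one] at hjensen
  calc ‖v y - v x‖ₑ ^ p
      ≤ (‖y - x‖ₑ * ∫⁻ t in Icc (0 : ℝ) 1, ‖fderiv ℝ v ((1 - t) • x + t • y)‖ₑ) ^ p := by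
        gcongr; exact enorm_sub_le_lintegral_enorm_fderiv hv x y
    _ = ‖y - x‖ₑ ^ p * (∫⁻ t in Icc (0 : ℝ) 1, ‖fderiv ℝ v ((1 - t) • x + t • y)‖ₑ) ^ p :=
        ENNReal.mul_rpow_of_nonneg _ _ hp0
    _ ≤ _ := by gcongr

section Haar

variable {E F : Type*} [NormedAddCommGroup E] [NormedSpace ℝ E] [FiniteDimensional ℝ E]
  [MeasurableSpace E] [BorelSpace E] {μ : Measure E} [μ.IsAddHaarMeasure]
  [NormedAddCommGroup F] [NormedSpace ℝ F] [CompleteSpace F]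

theorem lintegral_comp_smul_add (K : E → ℝ≥0∞) {s : ℝ} (hs : 0 < s) (b : E) :
    ∫⁻ x, K (s • x + b) ∂μ = ENNReal.ofReal s⁻¹ ^ Module.finrank ℝ E * ∫⁻ x, K x ∂μ := by
  rw [← ENNReal.ofReal_pow (by positivity), ← lintegral_add_right_eq_self K b]
  have hmap := (Homeomorph.smulOfNeZero s hs.ne').measurableEmbedding.lintegral_map (μ := μ)
    (fun x => K (x + b))
  have hscale : Measure.map (⇑(Homeomorph.smulOfNeZero (α := E) s hs.ne')) μ =
      ENNReal.ofReal |(s ^ Module.finrank ℝ E)⁻¹| • μ := Measure.map_addHaar_smul μ hs.ne'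
  rw [hscale, lintegral_smul_measure, abs_of_pos (by positivity), ← inv_pow] at hmap
  simpa only [smul_eq_mul, Homeomorph.smulOfNeZero_apply] using hmap.symm

variable {Q : Set E}

theorem setLIntegral_comp_smul_add_smul_le (hQ : Convex ℝ Q) (hQm : MeasurableSet Q)
    (K : E → ℝ≥0∞) {s : ℝ} (hs : 1 / 2 ≤ s) (hs1 : s ≤ 1) {y : E} (hy : y ∈ Q) :
    ∫⁻ x in Q, K (s • x + (1 - s) • y) ∂μ ≤ 2 ^ Module.finrank ℝ E * ∫⁻ x in Q, K x ∂μ := by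
  have hs0 : 0 < s := by linarith
  have hmem {x : E} (hx : x ∈ Q) : s • x + (1 - s) • y ∈ Q :=
    hQ hx hy hs0.le (by linarith) (by ring)
  have hs2 : ENNReal.ofReal s⁻¹ ≤ 2 :=
    ENNReal.ofReal_le_of_le_toReal (by rw [inv_le_comm₀ hs0 (by simp)]; simpa using hs)
  rw [← lintegral_indicator hQm, ← lintegral_indicator hQm]
  calc ∫⁻ x, Q.indicator (fun x => K (s • x + (1 - s) • y)) x ∂μ
      ≤ ∫⁻ x, Q.indicator K (s • x + (1 - s) • y) ∂μ := by
        refine lintegral_mono fun x => indicator_apply_le' (fun hx => ?_) fun _ => zero_le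
        rw [indicator_of_mem (hmem hx)]
    _ = ENNReal.ofReal s⁻¹ ^ Module.finrank ℝ E * ∫⁻ x, Q.indicator K x ∂μ :=
        lintegral_comp_smul_add _ hs0 _
    _ ≤ _ := by gcongr

/- For every `t`, one of the two weights `1 - t`, `t` is at least `1 / 2`; integrating first in
the variable carrying that weight costs at most a factor `2 ^ dim E`. -/
theorem setLIntegral_setLIntegral_comp_smul_add_smul_le (hQ : Convex ℝ Q) (hQm : MeasurableSet Q)
    {K : E → ℝ≥0∞} (hK : Measurable K) {t : ℝ} (ht : t ∈ Icc (0 : ℝ) 1) :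
    ∫⁻ x in Q, ∫⁻ y in Q, K ((1 - t) • x + t • y) ∂μ ∂μ ≤
      2 ^ Module.finrank ℝ E * (∫⁻ x in Q, K x ∂μ) * μ Q := by
  rw [← setLIntegral_const]
  rcases le_total t (1 / 2) with h | h
  · rw [lintegral_lintegral_swap (by fun_prop)]
    refine setLIntegral_mono' hQm fun y hy => ?_
    simpa using setLIntegral_comp_smul_add_smul_le (μ := μ) hQ hQm K (s := 1 - t)
      (by linarith) (by linarith [ht.1]) hy
  · refine setLIntegral_mono' hQm fun x hx => ?_
    simp_rw [add_comm ((1 - t) • x)]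
    exact setLIntegral_comp_smul_add_smul_le hQ hQm K h ht.2 hx

theorem setLIntegral_setLIntegral_lintegral_segment_swap {K : E → ℝ≥0∞} (hK : Continuous K) :
    ∫⁻ x in Q, ∫⁻ y in Q, ∫⁻ t in Icc (0 : ℝ) 1, K ((1 - t) • x + t • y) ∂volume ∂μ ∂μ =
      ∫⁻ t in Icc (0 : ℝ) 1, ∫⁻ x in Q, ∫⁻ y in Q, K ((1 - t) • x + t • y) ∂μ ∂μ := by
  have hinner (x : E) : ∫⁻ y in Q, ∫⁻ t in Icc (0 : ℝ) 1, K ((1 - t) • x + t • y) ∂volume ∂μ =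
      ∫⁻ t in Icc (0 : ℝ) 1, ∫⁻ y in Q, K ((1 - t) • x + t • y) ∂μ :=
    lintegral_lintegral_swap (hK.comp
      (by fun_prop : Continuous fun z : E × ℝ => (1 - z.2) • x + z.2 • z.1)).measurable.aemeasurable
  have hmeas : Measurable fun z : (E × ℝ) × E => K ((1 - z.1.2) • z.1.1 + z.1.2 • z.2) :=
    (hK.comp (by fun_prop)).measurable
  simp_rw [hinner]
  exact lintegral_lintegral_swap (Measurable.lintegral_prod_right' hmeas).aemeasurable

theorem setLIntegral_setLIntegral_enorm_sub_rpow_le (hQ : Convex ℝ Q) (hQm : MeasurableSet Q)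
    (hQb : Bornology.IsBounded Q) {v : E → F} (hv : ContDiff ℝ 1 v) {p : ℝ} (hp : 1 ≤ p) :
    ∫⁻ x in Q, ∫⁻ y in Q, ‖v y - v x‖ₑ ^ p ∂μ ∂μ ≤
      2 ^ Module.finrank ℝ E * ediam Q ^ p * (∫⁻ x in Q, ‖fderiv ℝ v x‖ₑ ^ p ∂μ) * μ Q := by
  set K : E → ℝ≥0∞ := fun x => ‖fderiv ℝ v x‖ₑ ^ p
  have hK : Continuous K :=
    ENNReal.continuous_rpow_const.comp (hv.continuous_fderiv one_ne_zero).enorm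
  have hdiam : ediam Q ^ p ≠ ∞ :=
    ENNReal.rpow_ne_top_of_nonneg (by linarith) hQb.ediam_ne_top
  calc ∫⁻ x in Q, ∫⁻ y in Q, ‖v y - v x‖ₑ ^ p ∂μ ∂μ
      ≤ ∫⁻ x in Q, ∫⁻ y in Q,
          ediam Q ^ p * ∫⁻ t in Icc (0 : ℝ) 1, K ((1 - t) • x + t • y) ∂volume ∂μ ∂μ := by
        refine setLIntegral_mono' hQm fun x hx => setLIntegral_mono' hQm fun y hy => ?_
        refine (enorm_sub_rpow_le_lintegral_enorm_fderiv_rpow hv hp x y).trans ?_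
        gcongr
        rw [← edist_eq_enorm_sub]
        exact edist_le_ediam_of_mem hy hx
    _ = ediam Q ^ p * ∫⁻ t in Icc (0 : ℝ) 1,
          ∫⁻ x in Q, ∫⁻ y in Q, K ((1 - t) • x + t • y) ∂μ ∂μ := by
        simp_rw [lintegral_const_mul' _ _ hdiam]
        rw [setLIntegral_setLIntegral_lintegral_segment_swap hK]
    _ ≤ ediam Q ^ p * ∫⁻ t in Icc (0 : ℝ) 1,
          2 ^ Module.finrank ℝ E * (∫⁻ x in Q, K x ∂μ) * μ Q := by
        gcongr ediam Q ^ p * ?_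
        exact setLIntegral_mono' measurableSet_Icc fun t ht =>
          setLIntegral_setLIntegral_comp_smul_add_smul_le hQ hQm hK.measurable ht
    _ = _ := by
        rw [setLIntegral_const, Real.volume_Icc, sub_zero, ENNReal.ofReal_one, mul_one]
        ring

theorem setLIntegral_enorm_average_norm_sub_rpow_le (hQ : Convex ℝ Q) (hQm : MeasurableSet Q)
    (hQb : Bornology.IsBounded Q) {v : E → F} (hv : ContDiff ℝ 1 v) {p : ℝ} (hp : 1 ≤ p) :
    ∫⁻ x in Q, ‖(⨍ y in Q, ‖v y‖ ∂μ) - ‖v x‖‖ₑ ^ p ∂μ ≤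
      2 ^ Module.finrank ℝ E * ediam Q ^ p * ∫⁻ x in Q, ‖fderiv ℝ v x‖ₑ ^ p ∂μ := by
  rcases eq_or_ne (μ Q) 0 with h0 | h0
  · simp [Measure.restrict_eq_zero.2 h0]
  have hfin : μ Q ≠ ∞ := hQb.measure_lt_top.ne
  have : IsFiniteMeasure (μ.restrict Q) := ⟨by simpa using hfin.lt_top⟩
  have : NeZero (μ.restrict Q) := ⟨by simpa [Measure.restrict_eq_zero]⟩
  have hint : IntegrableOn v Q μ :=
    (hv.continuous.continuousOn.integrableOn_compact hQb.isCompact_closure).mono_set subset_closure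
  calc ∫⁻ x in Q, ‖(⨍ y in Q, ‖v y‖ ∂μ) - ‖v x‖‖ₑ ^ p ∂μ
      ≤ ∫⁻ x in Q, ⨍⁻ y in Q, ‖v y - v x‖ₑ ^ p ∂μ ∂μ := by
        refine lintegral_mono fun x => le_trans ?_ (laverage_rpow_le
          (hv.continuous.sub continuous_const).enorm.aemeasurable hp)
        gcongr
        refine (enorm_average_sub_le hint.norm ‖v x‖).trans (lintegral_mono fun y => ?_)
        exact enorm_le_iff_norm_le.2 (abs_norm_sub_norm_le (v y) (v x))
    _ = (∫⁻ x in Q, ∫⁻ y in Q, ‖v y - v x‖ₑ ^ p ∂μ ∂μ) / μ Q := by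
        simp_rw [setLAverage_eq, div_eq_mul_inv]
        rw [lintegral_mul_const' _ _ (by simpa using h0)]
    _ ≤ _ := by
        refine ENNReal.div_le_of_le_mul ?_
        exact setLIntegral_setLIntegral_enorm_sub_rpow_le hQ hQm hQb hv hp

end Haar

/-! ### The maximal function -/

/-- The centred Hardy–Littlewood maximal function of `u`, with values in `ℝ≥0∞`. -/
noncomputable def maximalFn {E F : Type*} [PseudoMetricSpace E] [MeasurableSpace E]
    [NormedAddCommGroup F] (μ : Measure E) (u : E → F) (x : E) : ℝ≥0∞ :=
  ⨆ (r : ℝ) (_ : 0 < r), ⨍⁻ y in ball x r, ‖u y‖ₑ ∂μ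

section MaximalBasic

variable {E F : Type*} [PseudoMetricSpace E] [MeasurableSpace E] [NormedAddCommGroup F]
  {μ : Measure E} {u v : E → F} {x : E}

theorem laverage_le_maximalFn {r : ℝ} (hr : 0 < r) :
    ⨍⁻ y in ball x r, ‖u y‖ₑ ∂μ ≤ maximalFn μ u x :=
  le_iSup₂ (f := fun (r : ℝ) (_ : 0 < r) => ⨍⁻ y in ball x r, ‖u y‖ₑ ∂μ) r hr

theorem maximalFn_mono {G : Type*} [NormedAddCommGroup G] {w : E → G} (h : ∀ y, ‖u y‖ₑ ≤ ‖w y‖ₑ) :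
    maximalFn μ u x ≤ maximalFn μ w x :=
  iSup₂_mono fun _ _ => lintegral_mono h

theorem maximalFn_le_of_enorm_le {c : ℝ≥0∞} (h : ∀ y, ‖u y‖ₑ ≤ c) : maximalFn μ u x ≤ c :=
  iSup₂_le fun _ _ => (setLAverage_le_essSup _ _).trans (essSup_le_of_ae_le c (ae_of_all _ h))

theorem maximalFn_add_le (hu : AEStronglyMeasurable u μ) :
    maximalFn μ (u + v) x ≤ maximalFn μ u x + maximalFn μ v x := by
  refine iSup₂_le fun r hr => ?_
  calc ⨍⁻ y in ball x r, ‖u y + v y‖ₑ ∂μ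
      ≤ ⨍⁻ y in ball x r, (‖u y‖ₑ + ‖v y‖ₑ) ∂μ := lintegral_mono fun _ => enorm_add_le _ _
    _ = ⨍⁻ y in ball x r, ‖u y‖ₑ ∂μ + ⨍⁻ y in ball x r, ‖v y‖ₑ ∂μ :=
        lintegral_add_left' (hu.enorm.restrict.smul_measure _) _
    _ ≤ _ := add_le_add (laverage_le_maximalFn hr) (laverage_le_maximalFn hr)

theorem maximalFn_sum_le {ι : Type*} (s : Finset ι) {w : ι → E → F}
    (hw : ∀ i ∈ s, AEStronglyMeasurable (w i) μ) :
    maximalFn μ (∑ i ∈ s, w i) x ≤ ∑ i ∈ s, maximalFn μ (w i) x := by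
  induction s using Finset.cons_induction with
  | empty => exact maximalFn_le_of_enorm_le (by simp)
  | cons i s hi ih =>
    rw [Finset.sum_cons, Finset.sum_cons]
    exact (maximalFn_add_le (hw i (Finset.mem_cons_self i s))).trans
      (add_le_add_right (ih fun j hj => hw j (Finset.mem_cons_of_mem hj)) _)

theorem enorm_le_maximalFn [OpensMeasurableSpace E] [IsLocallyFiniteMeasure μ]
    [μ.IsOpenPosMeasure] (hu : ContinuousAt u x) : ‖u x‖ₑ ≤ maximalFn μ u x := by
  refine le_of_forall_lt fun c hc => ?_
  obtain ⟨d, hcd, hd⟩ := exists_between hc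
  obtain ⟨ρ, hρ0, hρ⟩ := eventually_nhds_iff_ball.1 (hu.enorm.eventually (lt_mem_nhds hd))
  obtain ⟨σ, hσ0, hσ⟩ := (μ.finiteAt_nhds x).exists_mem_basis nhds_basis_ball
  have hr : 0 < min ρ σ := lt_min hρ0 hσ0
  have hfin : μ (ball x (min ρ σ)) ≠ ∞ :=
    ((measure_mono (ball_subset_ball (min_le_right _ _))).trans_lt hσ).ne
  refine hcd.trans_le (le_trans ?_ (laverage_le_maximalFn hr))
  rw [← setLAverage_const (measure_ball_pos μ x hr).ne' hfin d, setLAverage_eq, setLAverage_eq]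
  gcongr ?_ / _
  exact setLIntegral_mono' measurableSet_ball fun y hy =>
    (hρ y (ball_subset_ball (min_le_left _ _) hy)).le

theorem lowerSemicontinuous_setLIntegral_ball (K : E → ℝ≥0∞) (r : ℝ) :
    LowerSemicontinuous fun x => ∫⁻ y in ball x r, K y ∂μ := by
  intro x c hc
  have hball : ball x r = ⋃ k : ℕ, ball x (r - 1 / (k + 1)) := by
    refine Subset.antisymm (fun y hy => ?_)
      (iUnion_subset fun k => ball_subset_ball (sub_le_self _ (by positivity)))
    obtain ⟨k, hk⟩ := exists_nat_one_div_lt (sub_pos.2 (mem_ball.1 hy))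
    exact mem_iUnion.2 ⟨k, mem_ball.2 (by linarith)⟩
  have hmono : Monotone fun k : ℕ => ball x (r - 1 / (k + 1)) := fun a b hab =>
    ball_subset_ball (sub_le_sub_left (Nat.one_div_le_one_div hab) r)
  simp only [hball, setLIntegral_iUnion_of_directed _ hmono.directed_le, lt_iSup_iff] at hc
  obtain ⟨k, hk⟩ := hc
  filter_upwards [ball_mem_nhds x (Nat.one_div_pos_of_nat (α := ℝ) (n := k))] with y hy
  refine hk.trans_le (lintegral_mono_set (ball_subset_ball' ?_))
  rw [mem_ball, dist_comm] at hy
  linarith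

end MaximalBasic

section MaximalHaar

variable {E F : Type*} [NormedAddCommGroup E] [NormedSpace ℝ E] [FiniteDimensional ℝ E]
  [MeasurableSpace E] [BorelSpace E] {μ : Measure E} [μ.IsAddHaarMeasure]
  [NormedAddCommGroup F]

theorem isOpen_lt_laverage_ball (K : E → ℝ≥0∞) (t : ℝ≥0∞) {r : ℝ} (hr : 0 < r) :
    IsOpen {x | t < ⨍⁻ y in ball x r, K y ∂μ} := by
  simp only [setLAverage_eq, Measure.addHaar_ball_center μ _ r]
  simp only [ENNReal.lt_div_iff_mul_lt (.inl (measure_ball_pos μ 0 hr).ne')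
    (.inl measure_ball_lt_top.ne)]
  exact (lowerSemicontinuous_setLIntegral_ball _ r).isOpen_preimage _

theorem isOpen_lt_maximalFn (u : E → F) (t : ℝ≥0∞) : IsOpen {x | t < maximalFn μ u x} := by
  simp only [maximalFn, lt_iSup_iff, Set.ofPred_exists]
  exact isOpen_iUnion fun r => isOpen_iUnion fun hr => isOpen_lt_laverage_ball _ t hr

theorem setLAverage_ball_comp_smul_add_smul (K : E → ℝ≥0∞) (x : E) {r t : ℝ} (ht : 0 < t) :
    ⨍⁻ z in ball x r, K ((1 - t) • x + t • z) ∂μ = ⨍⁻ z in ball x (t * r), K z ∂μ := by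
  have hmem (z : E) : t • z + (1 - t) • x ∈ ball x (t * r) ↔ z ∈ ball x r := by
    rw [mem_ball, mem_ball, dist_eq_norm, dist_eq_norm,
      show t • z + (1 - t) • x - x = t • (z - x) by module, norm_smul, Real.norm_of_nonneg ht.le]
    exact mul_lt_mul_iff_right₀ ht
  have hind (z : E) : (ball x r).indicator (fun z => K ((1 - t) • x + t • z)) z =
      (ball x (t * r)).indicator K (t • z + (1 - t) • x) := by
    by_cases hz : z ∈ ball x r
    · rw [indicator_of_mem hz, indicator_of_mem ((hmem z).2 hz), add_comm]
    · rw [indicator_of_notMem hz, indicator_of_notMem (mt (hmem z).1 hz)]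
  have hcancel : ENNReal.ofReal t⁻¹ ^ Module.finrank ℝ E * ENNReal.ofReal (t ^ Module.finrank ℝ E) =
      1 := by
    rw [← ENNReal.ofReal_pow (by positivity), ← ENNReal.ofReal_mul (by positivity), ← mul_pow,
      inv_mul_cancel₀ ht.ne', one_pow, ENNReal.ofReal_one]
  have hscale : ∫⁻ z in ball x r, K ((1 - t) • x + t • z) ∂μ =
      ENNReal.ofReal t⁻¹ ^ Module.finrank ℝ E * ∫⁻ z in ball x (t * r), K z ∂μ := by
    rw [← lintegral_indicator measurableSet_ball, ← lintegral_indicator measurableSet_ball,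
      ← lintegral_comp_smul_add _ ht ((1 - t) • x)]
    exact lintegral_congr hind
  rw [setLAverage_eq, setLAverage_eq, hscale, Measure.addHaar_ball_mul_of_pos μ x ht,
    Measure.addHaar_ball_center μ x, ← ENNReal.mul_div_mul_left (∫⁻ z in ball x (t * r), K z ∂μ) _
      (left_ne_zero_of_mul_eq_one hcancel) (ENNReal.pow_ne_top ENNReal.ofReal_ne_top),
    ← mul_assoc, hcancel, one_mul]

variable [NormedSpace ℝ F] [CompleteSpace F]

theorem laverage_enorm_sub_le_maximalFn_fderiv {u : E → F} (hu : ContDiff ℝ 1 u) (x : E) {r : ℝ}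
    (hr : 0 < r) :
    ⨍⁻ z in ball x r, ‖u z - u x‖ₑ ∂μ ≤ ENNReal.ofReal r * maximalFn μ (fderiv ℝ u) x := by
  set D : E → ℝ≥0∞ := fun x => ‖fderiv ℝ u x‖ₑ
  have hD : Continuous D := (hu.continuous_fderiv one_ne_zero).enorm
  have hmeas : Measurable fun z : E × ℝ => D ((1 - z.2) • x + z.2 • z.1) :=
    (hD.comp (by fun_prop)).measurable
  calc ⨍⁻ z in ball x r, ‖u z - u x‖ₑ ∂μ
      ≤ ⨍⁻ z in ball x r,
          ENNReal.ofReal r * ∫⁻ t in Icc (0 : ℝ) 1, D ((1 - t) • x + t • z) ∂volume ∂μ := by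
        rw [setLAverage_eq, setLAverage_eq]
        gcongr ?_ / _
        refine setLIntegral_mono' measurableSet_ball fun z hz => ?_
        refine (enorm_sub_le_lintegral_enorm_fderiv hu x z).trans ?_
        gcongr
        rw [← edist_eq_enorm_sub, edist_dist]
        exact ENNReal.ofReal_le_ofReal (mem_ball.1 hz).le
    _ = ENNReal.ofReal r * ∫⁻ t in Icc (0 : ℝ) 1, ⨍⁻ z in ball x r, D ((1 - t) • x + t • z) ∂μ := by
        rw [laverage, lintegral_const_mul' _ _ ENNReal.ofReal_ne_top]
        congr 1
        exact lintegral_lintegral_swap hmeas.aemeasurable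
    _ ≤ ENNReal.ofReal r * ∫⁻ _ in Ioc (0 : ℝ) 1, maximalFn μ (fderiv ℝ u) x := by
        rw [setLIntegral_congr Ioc_ae_eq_Icc.symm]
        gcongr _ * ?_
        refine setLIntegral_mono' measurableSet_Ioc fun t ht => ?_
        rw [setLAverage_ball_comp_smul_add_smul _ _ ht.1]
        exact laverage_le_maximalFn (mul_pos ht.1 hr)
    _ = _ := by simp

theorem setLAverage_le_two_pow_mul_setLAverage_ball {m x : E} {r : ℝ}
    (hm : dist m x ≤ r / 2) (K : E → ℝ≥0∞) :
    ⨍⁻ z in ball m (r / 2), K z ∂μ ≤ 2 ^ Module.finrank ℝ E * ⨍⁻ z in ball x r, K z ∂μ := by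
  have hvol : μ (ball x r) = 2 ^ Module.finrank ℝ E * μ (ball m (r / 2)) := by
    conv_lhs => rw [← mul_div_cancel₀ r two_ne_zero]
    rw [Measure.addHaar_ball_mul_of_pos μ x two_pos, Measure.addHaar_ball_center μ m,
      ENNReal.ofReal_pow two_pos.le, ENNReal.ofReal_ofNat]
  rw [setLAverage_eq, setLAverage_eq, hvol, mul_div_assoc', ENNReal.mul_div_mul_left _ _
    (by positivity) (by finiteness)]
  gcongr ?_ / _
  exact lintegral_mono_set (ball_subset_ball' (by linarith))

/- Both endpoints see the ball around their midpoint, which has a fixed proportion of the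
volume of the balls of radius `dist x y` around them. -/
theorem enorm_sub_le_edist_mul_maximalFn_fderiv {u : E → F} (hu : ContDiff ℝ 1 u) (x y : E) :
    ‖u x - u y‖ₑ ≤ 2 ^ Module.finrank ℝ E * edist x y *
      (maximalFn μ (fderiv ℝ u) x + maximalFn μ (fderiv ℝ u) y) := by
  rcases eq_or_ne x y with rfl | hxy
  · simp
  have hr : 0 < dist x y := dist_pos.2 hxy
  set m := midpoint ℝ x y
  have hmx : dist m x ≤ dist x y / 2 := by
    rw [dist_midpoint_left, Real.norm_ofNat]; linarith
  have hmy : dist m y ≤ dist x y / 2 := by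
    rw [dist_midpoint_right, Real.norm_ofNat]; linarith
  have hmeas : AEMeasurable (fun z => ‖u z - u x‖ₑ)
      ((μ.restrict (ball m (dist x y / 2)) univ)⁻¹ • μ.restrict (ball m (dist x y / 2))) :=
    (hu.continuous.sub continuous_const).enorm.aemeasurable
  calc ‖u x - u y‖ₑ = ⨍⁻ _ in ball m (dist x y / 2), ‖u x - u y‖ₑ ∂μ :=
        (setLAverage_const (measure_ball_pos μ m (by positivity)).ne' measure_ball_lt_top.ne _).symm
    _ ≤ ⨍⁻ z in ball m (dist x y / 2), (‖u z - u x‖ₑ + ‖u z - u y‖ₑ) ∂μ := by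
        refine lintegral_mono fun z => ?_
        simp_rw [← edist_eq_enorm_sub]
        exact edist_triangle_left _ _ _
    _ = ⨍⁻ z in ball m (dist x y / 2), ‖u z - u x‖ₑ ∂μ +
          ⨍⁻ z in ball m (dist x y / 2), ‖u z - u y‖ₑ ∂μ := lintegral_add_left' hmeas _
    _ ≤ 2 ^ Module.finrank ℝ E * (edist x y * maximalFn μ (fderiv ℝ u) x) +
          2 ^ Module.finrank ℝ E * (edist x y * maximalFn μ (fderiv ℝ u) y) := by
        rw [edist_dist]
        gcongr
        · exact (setLAverage_le_two_pow_mul_setLAverage_ball hmx _).trans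
            (by gcongr; exact laverage_enorm_sub_le_maximalFn_fderiv hu x hr)
        · exact (setLAverage_le_two_pow_mul_setLAverage_ball hmy _).trans
            (by gcongr; exact laverage_enorm_sub_le_maximalFn_fderiv hu y hr)
    _ = _ := by ring

end MaximalHaar

/-! ### Dirichlet energy of Lipschitz functions -/

section LipschitzEnergy

open ContinuousLinearMap Convolution

variable {E : Type*} [NormedAddCommGroup E] [NormedSpace ℝ E]

theorem fderiv_eq_of_le_of_eq {u w : E → ℝ} {x : E} (hu : DifferentiableAt ℝ u x)
    (hw : DifferentiableAt ℝ w x) (hle : u ≤ w) (heq : w x = u x) :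
    fderiv ℝ w x = fderiv ℝ u x := by
  have hmin : IsLocalMin (w - u) x := Eventually.of_forall fun y => by
    simpa [heq] using hle y
  rw [← sub_eq_zero, ← fderiv_sub hw hu, hmin.fderiv_eq_zero]

variable [FiniteDimensional ℝ E] [MeasurableSpace E] [BorelSpace E] {μ : Measure E}
  [μ.IsAddHaarMeasure] {p : ℝ}

theorem lintegral_enorm_fderiv_max_rpow_le {u v : E → ℝ} {L M : ℝ≥0} (hu : LipschitzWith L u)
    (hv : LipschitzWith M v) :
    ∫⁻ x, ‖fderiv ℝ (fun x => max (u x) (v x)) x‖ₑ ^ p ∂μ ≤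
      ∫⁻ x, ‖fderiv ℝ u x‖ₑ ^ p ∂μ + ∫⁻ x, ‖fderiv ℝ v x‖ₑ ^ p ∂μ := by
  rw [← lintegral_add_left ((measurable_fderiv ℝ u).enorm.pow_const p)]
  refine lintegral_mono_ae ?_
  filter_upwards [hu.ae_differentiableAt, hv.ae_differentiableAt,
    (hu.max hv).ae_differentiableAt] with x hux hvx hmax
  rcases le_total (u x) (v x) with h | h
  · rw [fderiv_eq_of_le_of_eq hvx hmax (fun y => le_max_right _ _) (max_eq_right h)]
    exact le_add_self
  · rw [fderiv_eq_of_le_of_eq hux hmax (fun y => le_max_left _ _) (max_eq_left h)]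
    exact le_self_add

theorem lintegral_lintegral_mul_comp_sub_rpow_le {ψ K : E → ℝ≥0∞} (hψ : Measurable ψ)
    (hψ1 : ∫⁻ x, ψ x ∂μ = 1) (hK : AEMeasurable K μ) (hp : 1 ≤ p) :
    ∫⁻ x, (∫⁻ t, ψ t * K (x - t) ∂μ) ^ p ∂μ ≤ ∫⁻ x, K x ^ p ∂μ := by
  have hprob : IsProbabilityMeasure (μ.withDensity ψ) := ⟨by simp [hψ1]⟩
  have hKx (x : E) : AEMeasurable (fun t => K (x - t)) μ :=
    hK.comp_quasiMeasurePreserving (quasiMeasurePreserving_sub_left μ x)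
  have hjensen (x : E) : (∫⁻ t, ψ t * K (x - t) ∂μ) ^ p ≤ ∫⁻ t, ψ t * K (x - t) ^ p ∂μ := by
    have h := laverage_rpow_le
      ((hKx x).mono_ac (withDensity_absolutelyContinuous μ ψ)) hp
    rwa [laverage_eq_lintegral, laverage_eq_lintegral,
      lintegral_withDensity_eq_lintegral_mul₀ hψ.aemeasurable (hKx x),
      lintegral_withDensity_eq_lintegral_mul₀ hψ.aemeasurable ((hKx x).pow_const p)] at h
  have hKt (t : E) : AEMeasurable (fun x => K (x - t)) μ :=
    hK.comp_quasiMeasurePreserving (measurePreserving_sub_right μ t).quasiMeasurePreserving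
  have hmeas : AEMeasurable (fun z : E × E => ψ z.2 * K (z.1 - z.2) ^ p) (μ.prod μ) :=
    (hψ.comp measurable_snd).aemeasurable.mul ((hK.comp_quasiMeasurePreserving
      (quasiMeasurePreserving_sub_of_right_invariant μ μ)).pow_const p)
  calc ∫⁻ x, (∫⁻ t, ψ t * K (x - t) ∂μ) ^ p ∂μ
      ≤ ∫⁻ x, ∫⁻ t, ψ t * K (x - t) ^ p ∂μ ∂μ := lintegral_mono hjensen
    _ = ∫⁻ t, ∫⁻ x, ψ t * K (x - t) ^ p ∂μ ∂μ := lintegral_lintegral_swap hmeas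
    _ = ∫⁻ t, ψ t * ∫⁻ x, K x ^ p ∂μ ∂μ := by
        refine lintegral_congr fun t => ?_
        rw [lintegral_const_mul'' _ ((hKt t).pow_const p),
          lintegral_sub_right_eq_self (fun x => K x ^ p) t]
    _ = ∫⁻ x, K x ^ p ∂μ := by rw [lintegral_mul_const _ hψ, hψ1, one_mul]

theorem lintegral_enorm_normed_eq_one (φ : ContDiffBump (0 : E)) :
    ∫⁻ x, ‖φ.normed μ x‖ₑ ∂μ = 1 := by
  rw [← ofReal_integral_norm_eq_lintegral_enorm φ.integrable_normed]
  simp_rw [Real.norm_of_nonneg (φ.nonneg_normed _)]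
  rw [φ.integral_normed, ENNReal.ofReal_one]

theorem lintegral_enorm_convolution_normed_rpow_le (φ : ContDiffBump (0 : E)) {k : E → ℝ}
    (hk : AEStronglyMeasurable k μ) (hp : 1 ≤ p) :
    ∫⁻ x, ‖(φ.normed μ ⋆[lsmul ℝ ℝ, μ] k) x‖ₑ ^ p ∂μ ≤ ∫⁻ x, ‖k x‖ₑ ^ p ∂μ := by
  refine le_trans (lintegral_mono fun x => ?_) (lintegral_lintegral_mul_comp_sub_rpow_le
    φ.continuous_normed.measurable.enorm (lintegral_enorm_normed_eq_one φ) hk.enorm hp)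
  gcongr
  refine (enorm_integral_le_lintegral_enorm _).trans_eq (lintegral_congr fun t => ?_)
  rw [lsmul_apply, enorm_smul]

theorem hasFDerivAt_convolution_normed_of_lipschitzWith (φ : ContDiffBump (0 : E)) {w : E → ℝ}
    {L : ℝ≥0} (hL : LipschitzWith L w) (x : E) :
    HasFDerivAt (φ.normed μ ⋆[lsmul ℝ ℝ, μ] w) (∫ t, φ.normed μ t • fderiv ℝ w (x - t) ∂μ) x := by
  have hφ : Continuous (φ.normed μ) := φ.continuous_normed
  have hcont (y : E) : Continuous fun t => φ.normed μ t * w (y - t) :=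
    hφ.mul (hL.continuous.comp (by fun_prop))
  have hmeas : AEStronglyMeasurable (fun t => φ.normed μ t • fderiv ℝ w (x - t)) μ :=
    (hφ.measurable.smul ((measurable_fderiv ℝ w).comp (by fun_prop))).aestronglyMeasurable
  have hlip (t : E) : LipschitzOnWith (Real.nnabs (‖φ.normed μ t‖ * L))
      (fun y => φ.normed μ t * w (y - t)) univ := by
    refine (LipschitzWith.of_dist_le_mul fun a b => ?_).lipschitzOnWith
    have := hL.dist_le_mul (a - t) (b - t)
    rw [dist_sub_right] at this
    rw [← smul_eq_mul, ← smul_eq_mul, dist_smul₀, Real.coe_nnabs, abs_of_nonneg (by positivity),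
      mul_assoc]
    gcongr
  have hdiff : ∀ᵐ t ∂μ, HasFDerivAt (fun y => φ.normed μ t * w (y - t))
      (φ.normed μ t • fderiv ℝ w (x - t)) x := by
    filter_upwards [(quasiMeasurePreserving_sub_left μ x).ae hL.ae_differentiableAt] with t ht
    exact ((hasFDerivAt_comp_sub t).2 ht.hasFDerivAt).const_smul (φ.normed μ t)
  exact (hasFDerivAt_integral_of_dominated_loc_of_lip (s := univ) univ_mem
    (Eventually.of_forall fun y => (hcont y).aestronglyMeasurable)
    ((hcont x).integrable_of_hasCompactSupport φ.hasCompactSupport_normed.mul_right) hmeas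
    (Eventually.of_forall hlip) (φ.integrable_normed.norm.mul_const _) hdiff).2

theorem lintegral_enorm_fderiv_convolution_normed_rpow_le (φ : ContDiffBump (0 : E)) {w : E → ℝ}
    {L : ℝ≥0} (hL : LipschitzWith L w) (hp : 1 ≤ p) :
    ∫⁻ x, ‖fderiv ℝ (φ.normed μ ⋆[lsmul ℝ ℝ, μ] w) x‖ₑ ^ p ∂μ ≤
      ∫⁻ x, ‖fderiv ℝ w x‖ₑ ^ p ∂μ := by
  refine le_trans (lintegral_mono fun x => ?_) (lintegral_lintegral_mul_comp_sub_rpow_le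
    φ.continuous_normed.measurable.enorm (lintegral_enorm_normed_eq_one φ)
    (measurable_fderiv ℝ w).enorm.aemeasurable hp)
  gcongr
  rw [(hasFDerivAt_convolution_normed_of_lipschitzWith φ hL x).fderiv]
  refine (enorm_integral_le_lintegral_enorm _).trans_eq (lintegral_congr fun t => ?_)
  rw [enorm_smul]

theorem exists_contDiff_abs_sub_le_lintegral_enorm_fderiv_le {w : E → ℝ} {L : ℝ≥0}
    (hL : LipschitzWith L w) (hc : HasCompactSupport w) (hp : 1 ≤ p) {δ : ℝ} (hδ : 0 < δ) :
    ∃ g : E → ℝ, ContDiff ℝ (⊤ : ℕ∞) g ∧ HasCompactSupport g ∧ (∀ x, |g x - w x| ≤ δ) ∧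
      ∫⁻ x, ‖fderiv ℝ g x‖ₑ ^ p ∂μ ≤ ∫⁻ x, ‖fderiv ℝ w x‖ₑ ^ p ∂μ := by
  have hr : 0 < δ / (L + 1) := by positivity
  let φ : ContDiffBump (0 : E) := ⟨δ / (L + 1) / 2, δ / (L + 1), by positivity, half_lt_self hr⟩
  refine ⟨φ.normed μ ⋆[lsmul ℝ ℝ, μ] w,
    φ.hasCompactSupport_normed.contDiff_convolution_left _ φ.contDiff_normed
      hL.continuous.locallyIntegrable,
    φ.hasCompactSupport_normed.convolution _ hc, fun x => ?_,
    lintegral_enorm_fderiv_convolution_normed_rpow_le φ hL hp⟩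
  refine φ.dist_normed_convolution_le hL.continuous.aestronglyMeasurable fun y hy => ?_
  calc dist (w y) (w x) ≤ L * dist y x := hL.dist_le_mul y x
    _ ≤ (L + 1) * (δ / (L + 1)) := by
        gcongr
        · linarith
        · exact (mem_ball.1 hy).le
    _ = δ := mul_div_cancel₀ _ (by positivity)

end LipschitzEnergy

/-! ### Capacity -/

section Capacity

variable {n : ℕ} {p : ℝ}

theorem capK_le_of_lipschitzWith (hp : 1 ≤ p) {F : Set (En n)} {w : En n → ℝ} {L : ℝ≥0}
    (hL : LipschitzWith L w) (hc : HasCompactSupport w) (hF : ∀ x ∈ F, 1 ≤ w x) :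
    capK p F ≤ ∫⁻ x, ‖fderiv ℝ w x‖ₑ ^ p := by
  have hscaled : ∀ᶠ c : ℝ in 𝓝[>] 1,
      capK p F ≤ ENNReal.ofReal c ^ p * ∫⁻ x, ‖fderiv ℝ w x‖ₑ ^ p := by
    filter_upwards [self_mem_nhdsWithin] with c (hc1 : 1 < c)
    have hc0 : 0 < c := one_pos.trans hc1
    obtain ⟨g, hg, hgc, hgw, hen⟩ := exists_contDiff_abs_sub_le_lintegral_enorm_fderiv_le
      (μ := volume) hL hc hp (sub_pos.2 (inv_lt_one_of_one_lt₀ hc1))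
    refine (iInf₂_le (fun x => c * g x) ⟨contDiff_const.mul hg, hgc.mul_left, fun x hx => ?_⟩).trans
      (le_trans (le_of_eq ?_) (mul_le_mul_right hen _))
    · rw [← lintegral_const_mul' _ _ (by finiteness)]
      refine lintegral_congr fun x => ?_
      rw [fderiv_const_mul (hg.differentiable (by simp) x), ← enorm_eq_nnnorm, enorm_smul,
        ENNReal.mul_rpow_of_nonneg _ _ (by positivity), Real.enorm_of_nonneg hc0.le]
    · have := (abs_le.1 (hgw x)).1
      calc 1 = c * c⁻¹ := (mul_inv_cancel₀ hc0.ne').symm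
        _ ≤ c * g x := by gcongr; linarith [hF x hx]
  have hlim : Tendsto (fun c : ℝ => ENNReal.ofReal c ^ p * ∫⁻ x, ‖fderiv ℝ w x‖ₑ ^ p) (𝓝[>] 1)
      (𝓝 (ENNReal.ofReal 1 ^ p * ∫⁻ x, ‖fderiv ℝ w x‖ₑ ^ p)) :=
    ENNReal.Tendsto.mul_const (((ENNReal.continuous_rpow_const.comp
      ENNReal.continuous_ofReal).tendsto 1).mono_left nhdsWithin_le_nhds) (by simp)
  simpa using ge_of_tendsto hlim hscaled

theorem capK_empty (hp : 0 < p) : capK p (∅ : Set (En n)) = 0 := by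
  refine le_zero_iff.1 ((iInf₂_le (fun _ => 0)
    ⟨contDiff_const, HasCompactSupport.zero, by simp⟩).trans_eq ?_)
  simp [hp]

theorem capK_mono {A B : Set (En n)} (h : A ⊆ B) : capK p A ≤ capK p B :=
  iInf_mono fun _ => iInf_mono' fun hg => ⟨⟨hg.1, hg.2.1, fun x hx => hg.2.2 x (h hx)⟩, le_rfl⟩

theorem capK_union_le (hp : 1 ≤ p) (A B : Set (En n)) :
    capK p (A ∪ B) ≤ capK p A + capK p B := by
  simp only [capK.eq_def p A, capK.eq_def p B, ENNReal.iInf_add, ENNReal.add_iInf]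
  refine le_iInf₂ fun v hv => le_iInf₂ fun u hu => ?_
  obtain ⟨L, hL⟩ := (hu.1.of_le (by simp)).lipschitzWith_of_hasCompactSupport hu.2.1 one_ne_zero
  obtain ⟨M, hM⟩ := (hv.1.of_le (by simp)).lipschitzWith_of_hasCompactSupport hv.2.1 one_ne_zero
  refine (capK_le_of_lipschitzWith hp (hL.max hM) (hu.2.1.comp₂_left hv.2.1 (max_self 0)) ?_).trans
    (lintegral_enorm_fderiv_max_rpow_le hL hM)
  rintro x (hx | hx)
  · exact le_max_of_le_left (hu.2.2 x hx)
  · exact le_max_of_le_right (hv.2.2 x hx)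

theorem capK_biUnion_finset_le (hp : 1 ≤ p) {ι : Type*} (t : Finset ι) (K : ι → Set (En n)) :
    capK p (⋃ i ∈ t, K i) ≤ ∑ i ∈ t, capK p (K i) := by
  classical
  induction t using Finset.induction_on with
  | empty => simp [capK_empty (one_pos.trans_le hp)]
  | insert a s ha ih =>
    rw [Finset.set_biUnion_insert, Finset.sum_insert ha]
    exact (capK_union_le hp _ _).trans (add_le_add_right ih _)

theorem capK_le_capOpen {F U : Set (En n)} (hFU : F ⊆ U) (hF : IsCompact F) :
    capK p F ≤ capOpen p U :=
  le_iSup₂_of_le F ⟨hFU, hF⟩ le_rfl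

theorem capOpen_iUnion_le (hp : 1 ≤ p) {ι : Type*} {U : ι → Set (En n)}
    (hU : ∀ i, IsOpen (U i)) : capOpen p (⋃ i, U i) ≤ ∑' i, capOpen p (U i) := by
  refine iSup₂_le fun F ⟨hFU, hF⟩ => ?_
  obtain ⟨t, ht⟩ := hF.elim_finite_subcover U hU hFU
  obtain ⟨K, hK, hKU, rfl⟩ := hF.finite_compact_cover t U (fun i _ => hU i) ht
  calc capK p (⋃ i ∈ t, K i) ≤ ∑ i ∈ t, capK p (K i) := capK_biUnion_finset_le hp t K
    _ ≤ ∑ i ∈ t, capOpen p (U i) := Finset.sum_le_sum fun i _ => capK_le_capOpen (hKU i) (hK i)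
    _ ≤ ∑' i, capOpen p (U i) := ENNReal.sum_le_tsum t

theorem cap_le_capOpen {A U : Set (En n)} (hAU : A ⊆ U) (hU : IsOpen U) : cap p A ≤ capOpen p U :=
  iInf₂_le_of_le U ⟨hAU, hU⟩ le_rfl

theorem cap_empty (hp : 0 < p) : cap p (∅ : Set (En n)) = 0 :=
  le_zero_iff.1 <| (cap_le_capOpen Subset.rfl isOpen_empty).trans <|
    iSup₂_le fun _ hF => (subset_empty_iff.1 hF.1 ▸ capK_empty hp).le

end Capacity

/-! ### Folding space into a ball -/

section FoldBall

open EuclideanGeometry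

variable {E : Type*} [NormedAddCommGroup E] [InnerProductSpace ℝ E] {c : E} {r : ℝ}

open scoped Classical in
/-- The retraction of `E` onto `closedBall c r` which sends a point outside the ball to its image
under the inversion in the boundary sphere. Composing with it extends functions on the ball with
control of their energy. -/
noncomputable def foldBall (c : E) (r : ℝ) (x : E) : E :=
  if x ∈ closedBall c r then x else inversion c r x

theorem foldBall_of_mem {x : E} (hx : x ∈ closedBall c r) : foldBall c r x = x := if_pos hx

theorem foldBall_of_notMem {x : E} (hx : x ∉ closedBall c r) :
    foldBall c r x = inversion c r x := if_neg hx

theorem inversion_mem_closedBall {x : E} (hr : 0 ≤ r) (hx : x ∉ closedBall c r) :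
    inversion c r x ∈ closedBall c r := by
  rw [mem_closedBall, not_le] at hx
  rw [mem_closedBall, dist_inversion_center, div_le_iff₀ (hr.trans_lt hx), sq]
  gcongr

theorem foldBall_mem_closedBall (hr : 0 ≤ r) (x : E) : foldBall c r x ∈ closedBall c r := by
  by_cases hx : x ∈ closedBall c r
  · rwa [foldBall_of_mem hx]
  · simpa only [foldBall_of_notMem hx] using inversion_mem_closedBall hr hx

theorem dist_inversion_le_of_mem_closedBall {x y : E} (hr : 0 ≤ r) (hx : x ∈ closedBall c r)
    (hy : y ∉ closedBall c r) : dist x (inversion c r y) ≤ dist x y := by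
  rw [mem_closedBall, dist_eq_norm] at hx hy
  rw [not_le] at hy
  set a := x - c
  set b := y - c
  set s := (r / ‖b‖) ^ 2
  have hs : s * ‖b‖ ^ 2 = r ^ 2 := by simp only [s]; field_simp [(hr.trans_lt hy).ne']
  have hs1 : s ≤ 1 := pow_le_one₀ (by positivity) (div_le_one_of_le₀ hy.le (by positivity))
  have hinner : 2 * inner ℝ a b ≤ r ^ 2 + ‖b‖ ^ 2 := by
    nlinarith [real_inner_le_norm a b, sq_nonneg (‖a‖ - ‖b‖), pow_le_pow_left₀ (norm_nonneg a) hx 2]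
  have hinv : x - inversion c r y = a - s • b := by
    simp only [inversion_def, dist_eq_norm, vsub_eq_sub, vadd_eq_add, a, b, s]
    abel
  have hsub : x - y = a - b := (sub_sub_sub_cancel_right x y c).symm
  rw [dist_eq_norm, dist_eq_norm, hinv, hsub, ← sq_le_sq₀ (norm_nonneg _) (norm_nonneg _),
    norm_sub_sq_real a (s • b), norm_sub_sq_real a b, inner_smul_right, norm_smul, mul_pow,
    Real.norm_of_nonneg (by positivity)]
  have hs2 : s ^ 2 * ‖b‖ ^ 2 = s * r ^ 2 := by rw [sq, mul_assoc, hs]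
  nlinarith [mul_nonneg (sub_nonneg.2 hs1) (sub_nonneg.2 hinner)]

theorem dist_inversion_inversion_le {x y : E} (hr : 0 ≤ r) (hx : x ∉ closedBall c r)
    (hy : y ∉ closedBall c r) : dist (inversion c r x) (inversion c r y) ≤ dist x y := by
  rw [mem_closedBall, not_le] at hx hy
  rw [dist_inversion_inversion (dist_pos.1 (hr.trans_lt hx)) (dist_pos.1 (hr.trans_lt hy)), sq]
  refine mul_le_of_le_one_left dist_nonneg (div_le_one_of_le₀ ?_ (by positivity))
  gcongr

theorem lipschitzWith_foldBall (c : E) (hr : 0 ≤ r) : LipschitzWith 1 (foldBall c r) := by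
  refine LipschitzWith.of_dist_le_mul fun x y => ?_
  rw [NNReal.coe_one, one_mul]
  by_cases hx : x ∈ closedBall c r <;> by_cases hy : y ∈ closedBall c r
  · rw [foldBall_of_mem hx, foldBall_of_mem hy]
  · rw [foldBall_of_mem hx, foldBall_of_notMem hy]
    exact dist_inversion_le_of_mem_closedBall hr hx hy
  · rw [foldBall_of_notMem hx, foldBall_of_mem hy, dist_comm, dist_comm x]
    exact dist_inversion_le_of_mem_closedBall hr hy hx
  · rw [foldBall_of_notMem hx, foldBall_of_notMem hy]
    exact dist_inversion_inversion_le hr hx hy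

variable [FiniteDimensional ℝ E]

theorem abs_det_smul_reflection (a : ℝ) (S : Submodule ℝ E) :
    |(a • (S.reflection : E →L[ℝ] E)).det| = |a| ^ Module.finrank ℝ E := by
  have h : ((S.reflection : E →L[ℝ] E) : E →ₗ[ℝ] E).det = (-1) ^ Module.finrank ℝ Sᗮ :=
    Submodule.det_reflection S
  rw [ContinuousLinearMap.det, ContinuousLinearMap.toLinearMap_smul, LinearMap.det_smul, h]
  simp [abs_mul]

variable [MeasurableSpace E] [BorelSpace E] {μ : Measure E} [μ.IsAddHaarMeasure]

theorem setLIntegral_comp_inversion_le (hr : 0 < r) (K : E → ℝ≥0∞) :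
    ∫⁻ x in closedBall c (2 * r) \ closedBall c r, K (inversion c r x) ∂μ ≤
      4 ^ Module.finrank ℝ E * ∫⁻ x in closedBall c r, K x ∂μ := by
  set A := closedBall c (2 * r) \ closedBall c r
  have hA : MeasurableSet A := measurableSet_closedBall.diff measurableSet_closedBall
  have hpos {x : E} (hx : x ∈ A) : 0 < dist x c := hr.trans (not_le.1 hx.2)
  set D : E → E →L[ℝ] E := fun x => (r / dist x c) ^ 2 • ((ℝ ∙ (x - c))ᗮ.reflection : E →L[ℝ] E)
  have hdet {x : E} (hx : x ∈ A) :
      1 ≤ 4 ^ Module.finrank ℝ E * ENNReal.ofReal |(D x).det| := by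
    have hhalf : 1 / 2 ≤ r / dist x c := by
      rw [div_le_div_iff₀ two_pos (hpos hx), one_mul, mul_comm]
      exact hx.1
    rw [abs_det_smul_reflection, ENNReal.ofReal_pow (by positivity), ← mul_pow]
    refine one_le_pow₀ ?_
    rw [← ENNReal.ofReal_ofNat 4, ← ENNReal.ofReal_mul (by norm_num), ENNReal.one_le_ofReal,
      abs_of_nonneg (by positivity)]
    nlinarith
  calc ∫⁻ x in A, K (inversion c r x) ∂μ
      ≤ ∫⁻ x in A, 4 ^ Module.finrank ℝ E *
          (ENNReal.ofReal |(D x).det| * K (inversion c r x)) ∂μ := by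
        refine setLIntegral_mono' hA fun x hx => ?_
        rw [← mul_assoc]
        exact le_mul_of_one_le_left zero_le (hdet hx)
    _ = 4 ^ Module.finrank ℝ E * ∫⁻ x in inversion c r '' A, K x ∂μ := by
        rw [lintegral_const_mul' _ _ (by finiteness),
          lintegral_image_eq_lintegral_abs_det_fderiv_mul μ hA
            (fun x hx => (hasFDerivAt_inversion (dist_pos.1 (hpos hx))).hasFDerivWithinAt)
            (inversion_injective c hr.ne').injOn K]
    _ ≤ _ := by
        gcongr
        rintro _ ⟨x, hx, rfl⟩
        exact inversion_mem_closedBall hr.le hx.2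

theorem setLIntegral_comp_foldBall_le (hr : 0 < r) (K : E → ℝ≥0∞) :
    ∫⁻ x in closedBall c (2 * r), K (foldBall c r x) ∂μ ≤
      (1 + 4 ^ Module.finrank ℝ E) * ∫⁻ x in closedBall c r, K x ∂μ := by
  have hinside : ∫⁻ x in closedBall c r, K (foldBall c r x) ∂μ = ∫⁻ x in closedBall c r, K x ∂μ :=
    setLIntegral_congr_fun measurableSet_closedBall fun x hx => by simp only [foldBall_of_mem hx]
  have houtside : ∫⁻ x in closedBall c (2 * r) \ closedBall c r, K (foldBall c r x) ∂μ =
      ∫⁻ x in closedBall c (2 * r) \ closedBall c r, K (inversion c r x) ∂μ :=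
    setLIntegral_congr_fun (measurableSet_closedBall.diff measurableSet_closedBall)
      fun x hx => by simp only [foldBall_of_notMem hx.2]
  rw [add_mul, one_mul, ← lintegral_inter_add_sdiff _ (closedBall c (2 * r))
    (measurableSet_closedBall (x := c) (ε := r)),
    inter_eq_self_of_subset_right (closedBall_subset_closedBall (by linarith)), hinside, houtside]
  gcongr
  exact setLIntegral_comp_inversion_le hr K

end FoldBall

/-! ### Correcting the mean on a ball -/

section MeanCorrection

theorem lipschitzWith_mul_of_norm_le {X : Type*} [PseudoMetricSpace X] {f g : X → ℝ}
    {K L A B : ℝ≥0} (hf : LipschitzWith K f) (hg : LipschitzWith L g) (hA : ∀ x, ‖f x‖ ≤ A)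
    (hB : ∀ x, ‖g x‖ ≤ B) : LipschitzWith (A * L + B * K) (fun x => f x * g x) := by
  refine LipschitzWith.of_dist_le_mul fun x y => ?_
  have hfg : f x * g x - f y * g y = f x * (g x - g y) + g y * (f x - f y) := by ring
  calc dist (f x * g x) (f y * g y) = ‖f x * (g x - g y) + g y * (f x - f y)‖ := by
        rw [dist_eq_norm, hfg]
    _ ≤ ‖f x‖ * dist (g x) (g y) + ‖g y‖ * dist (f x) (f y) := by
        rw [dist_eq_norm, dist_eq_norm, ← norm_mul, ← norm_mul]
        exact norm_add_le _ _
    _ ≤ A * (L * dist x y) + B * (K * dist x y) := by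
        gcongr
        exacts [hA x, hg.dist_le_mul x y, hB y, hf.dist_le_mul x y]
    _ = _ := by push_cast; ring

theorem lipschitzWith_coe_thickenedIndicator {X : Type*} [PseudoMetricSpace X] {r : ℝ} (hr : 0 < r)
    (S : Set X) : LipschitzWith r.toNNReal⁻¹ fun x => (thickenedIndicator hr S x : ℝ) :=
  LipschitzWith.of_dist_le_mul fun x y => (lipschitzWith_thickenedIndicator hr S).dist_le_mul x y

theorem norm_coe_thickenedIndicator_le {X : Type*} [PseudoMetricSpace X] {r : ℝ} (hr : 0 < r)
    (S : Set X) (x : X) : ‖(thickenedIndicator hr S x : ℝ)‖ ≤ 1 := by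
  simpa using thickenedIndicator_le_one hr S x

variable {E F : Type*} [NormedAddCommGroup E] [NormedAddCommGroup F]

theorem norm_fderiv_mul_const_sub_norm_comp_le [NormedSpace ℝ E] [NormedSpace ℝ F] {χ : E → ℝ}
    {K : ℝ≥0} (hχ : LipschitzWith K χ) (hχ1 : ∀ x, ‖χ x‖ ≤ 1) {φ : E → E}
    (hφ : LipschitzWith 1 φ) {u : E → F} {x : E} (hu : DifferentiableAt ℝ u (φ x)) (a : ℝ) :
    ‖fderiv ℝ (fun y => χ y * (a - ‖u (φ y)‖)) x‖ ≤ K * ‖a - ‖u (φ x)‖‖ + ‖fderiv ℝ u (φ x)‖ := by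
  refine le_of_forall_pos_le_add fun ε hε => norm_fderiv_le_of_lip' ℝ (by positivity) ?_
  have hslope : ∀ᶠ z in 𝓝 (φ x), ‖u z - u (φ x)‖ ≤ (‖fderiv ℝ u (φ x)‖ + ε) * ‖z - φ x‖ := by
    filter_upwards [hu.hasFDerivAt.isLittleO.def hε] with z hz
    linarith [norm_sub_norm_le (u z - u (φ x)) (fderiv ℝ u (φ x) (z - φ x)),
      (fderiv ℝ u (φ x)).le_opNorm (z - φ x)]
  filter_upwards [hφ.continuous.continuousAt.eventually hslope] with y hy
  have hχy : ‖χ y - χ x‖ ≤ K * ‖y - x‖ := by simpa only [dist_eq_norm] using hχ.dist_le_mul y x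
  have hφy : ‖φ y - φ x‖ ≤ ‖y - x‖ := by simpa [dist_eq_norm] using hφ.dist_le_mul y x
  calc ‖χ y * (a - ‖u (φ y)‖) - χ x * (a - ‖u (φ x)‖)‖
      = ‖χ y * (‖u (φ x)‖ - ‖u (φ y)‖) + (χ y - χ x) * (a - ‖u (φ x)‖)‖ := by congr 1; ring
    _ ≤ ‖χ y‖ * ‖u (φ y) - u (φ x)‖ + ‖χ y - χ x‖ * ‖a - ‖u (φ x)‖‖ := by
        refine (norm_add_le _ _).trans ?_
        rw [norm_mul, norm_mul, norm_sub_rev (u (φ y))]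
        gcongr
        exact abs_norm_sub_norm_le _ _
    _ ≤ 1 * ((‖fderiv ℝ u (φ x)‖ + ε) * ‖y - x‖) + K * ‖y - x‖ * ‖a - ‖u (φ x)‖‖ := by
        gcongr
        · exact hχ1 y
        · exact hy.trans (by gcongr)
    _ = _ := by ring

variable [InnerProductSpace ℝ E] [MeasurableSpace E]

/-- A Lipschitz function supported in `closedBall c (2 * r)` which on `closedBall c r` equals the
deviation of `‖u‖` from its mean over that ball: the values of `u` outside the ball are replaced by
reflected ones, and the result is cut off. -/
noncomputable def meanCorrection (μ : Measure E) (u : E → F) (c : E) {r : ℝ} (hr : 0 < r) (x : E) :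
    ℝ :=
  thickenedIndicator hr (closedBall c r) x *
    ((⨍ y in closedBall c r, ‖u y‖ ∂μ) - ‖u (foldBall c r x)‖)

variable {μ : Measure E} {u : E → F} {c : E} {r : ℝ}

theorem meanCorrection_of_mem_closedBall (hr : 0 < r) {x : E} (hx : x ∈ closedBall c r) :
    meanCorrection μ u c hr x = (⨍ y in closedBall c r, ‖u y‖ ∂μ) - ‖u x‖ := by
  simp [meanCorrection, thickenedIndicator_one hr _ hx, foldBall_of_mem hx]

theorem tsupport_meanCorrection_subset (hr : 0 < r) :
    tsupport (meanCorrection μ u c hr) ⊆ closedBall c (2 * r) := by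
  refine closure_minimal (fun x hx => ?_) isClosed_closedBall
  contrapose! hx
  have hout : x ∉ thickening r (closedBall c r) := by
    simp_rw [thickening_closedBall hr hr.le]
    exact fun h => hx (ball_subset_closedBall (by rwa [two_mul]))
  simp [meanCorrection, thickenedIndicator_zero hr _ hout]

variable [NormedSpace ℝ F]

theorem exists_lipschitzWith_meanCorrection [ProperSpace E] (hu : ContDiff ℝ 1 u) (hr : 0 < r) :
    ∃ L, LipschitzWith L (meanCorrection μ u c hr) := by
  set a := ⨍ y in closedBall c r, ‖u y‖ ∂μ
  obtain ⟨L, hL⟩ := hu.contDiffOn.exists_lipschitzOnWith one_ne_zero (convex_closedBall c r)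
    (isCompact_closedBall c r)
  obtain ⟨B, hB⟩ := (isCompact_closedBall c r).exists_bound_of_continuousOn
    (continuous_const.sub hu.continuous.norm : Continuous fun y => a - ‖u y‖).continuousOn
  have hlip : LipschitzWith L fun x => a - ‖u (foldBall c r x)‖ := by
    refine LipschitzWith.of_dist_le_mul fun x y => ?_
    have hfold (z : E) := foldBall_mem_closedBall (c := c) hr.le z
    rw [dist_sub_left]
    calc dist ‖u (foldBall c r x)‖ ‖u (foldBall c r y)‖
        ≤ dist (u (foldBall c r x)) (u (foldBall c r y)) := by
          rw [dist_eq_norm (u _)]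
          exact dist_norm_norm_le _ _
      _ ≤ L * dist (foldBall c r x) (foldBall c r y) := hL.dist_le_mul _ (hfold x) _ (hfold y)
      _ ≤ L * dist x y := by
        gcongr
        simpa using (lipschitzWith_foldBall c hr.le).dist_le_mul x y
  exact ⟨_, lipschitzWith_mul_of_norm_le (A := 1) (B := B.toNNReal)
    (lipschitzWith_coe_thickenedIndicator hr _) hlip (norm_coe_thickenedIndicator_le hr _)
    fun x => (hB _ (foldBall_mem_closedBall hr.le x)).trans (Real.le_coe_toNNReal B)⟩

theorem enorm_fderiv_meanCorrection_rpow_le (hu : Differentiable ℝ u) (hr : 0 < r) {p : ℝ}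
    (hp : 1 ≤ p) (x : E) :
    ‖fderiv ℝ (meanCorrection μ u c hr) x‖ₑ ^ p ≤ 2 ^ (p - 1) *
      ((ENNReal.ofReal r ^ p)⁻¹ *
        ‖(⨍ y in closedBall c r, ‖u y‖ ∂μ) - ‖u (foldBall c r x)‖‖ₑ ^ p +
          ‖fderiv ℝ u (foldBall c r x)‖ₑ ^ p) := by
  have hp0 : 0 ≤ p := zero_le_one.trans hp
  have hbound := norm_fderiv_mul_const_sub_norm_comp_le
    (lipschitzWith_coe_thickenedIndicator hr (closedBall c r))
    (norm_coe_thickenedIndicator_le hr _) (lipschitzWith_foldBall c hr.le) (hu (foldBall c r x))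
    (⨍ y in closedBall c r, ‖u y‖ ∂μ)
  have henorm : ‖fderiv ℝ (meanCorrection μ u c hr) x‖ₑ ≤ (ENNReal.ofReal r)⁻¹ *
      ‖(⨍ y in closedBall c r, ‖u y‖ ∂μ) - ‖u (foldBall c r x)‖‖ₑ +
        ‖fderiv ℝ u (foldBall c r x)‖ₑ := by
    rw [← ENNReal.ofReal_inv_of_pos hr, ← ofReal_norm, ← ofReal_norm, ← ofReal_norm,
      ← ENNReal.ofReal_mul (by positivity), ← ENNReal.ofReal_add (by positivity) (by positivity)]
    refine ENNReal.ofReal_le_ofReal (hbound.trans_eq ?_)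
    rw [NNReal.coe_inv, Real.coe_toNNReal r hr.le]
  refine ((ENNReal.rpow_le_rpow henorm hp0).trans
    (ENNReal.rpow_add_le_mul_rpow_add_rpow _ _ hp)).trans_eq ?_
  rw [ENNReal.mul_rpow_of_nonneg _ _ hp0, ENNReal.inv_rpow]

variable [FiniteDimensional ℝ E] [BorelSpace E] [μ.IsAddHaarMeasure] [CompleteSpace F]

theorem setLIntegral_closedBall_enorm_average_norm_sub_rpow_le (hu : ContDiff ℝ 1 u) (hr : 0 ≤ r)
    {p : ℝ} (hp : 1 ≤ p) :
    ∫⁻ x in closedBall c r, ‖(⨍ y in closedBall c r, ‖u y‖ ∂μ) - ‖u x‖‖ₑ ^ p ∂μ ≤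
      2 ^ Module.finrank ℝ E * 2 ^ p * ENNReal.ofReal r ^ p *
        ∫⁻ x in closedBall c r, ‖fderiv ℝ u x‖ₑ ^ p ∂μ := by
  refine (setLIntegral_enorm_average_norm_sub_rpow_le (convex_closedBall c r)
    measurableSet_closedBall isBounded_closedBall hu hp).trans ?_
  rw [mul_assoc (2 ^ _) (2 ^ p), ← ENNReal.mul_rpow_of_nonneg _ _ (by positivity)]
  gcongr
  rw [← closedEBall_ofReal hr]
  exact ediam_closedEBall_le

theorem lintegral_enorm_fderiv_meanCorrection_rpow_le (hu : ContDiff ℝ 1 u) (hr : 0 < r) {p : ℝ}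
    (hp : 1 ≤ p) :
    ∫⁻ x, ‖fderiv ℝ (meanCorrection μ u c hr) x‖ₑ ^ p ∂μ ≤
      (1 + 4 ^ Module.finrank ℝ E) * (2 ^ (p - 1) * (2 ^ Module.finrank ℝ E * 2 ^ p + 1)) *
        ∫⁻ x in closedBall c r, ‖fderiv ℝ u x‖ₑ ^ p ∂μ := by
  have hp0 : 0 < p := one_pos.trans_le hp
  set a := ⨍ y in closedBall c r, ‖u y‖ ∂μ
  set R := ENNReal.ofReal r ^ p
  have hR0 : R ≠ 0 := by simp [R, hr]
  have hRtop : R ≠ ∞ := by finiteness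
  set D := ∫⁻ x in closedBall c r, ‖fderiv ℝ u x‖ₑ ^ p ∂μ
  have hpoincare : ∫⁻ x in closedBall c r, ‖a - ‖u x‖‖ₑ ^ p ∂μ ≤
      2 ^ Module.finrank ℝ E * 2 ^ p * R * D :=
    setLIntegral_closedBall_enorm_average_norm_sub_rpow_le hu hr.le hp
  calc ∫⁻ x, ‖fderiv ℝ (meanCorrection μ u c hr) x‖ₑ ^ p ∂μ
      = ∫⁻ x in closedBall c (2 * r), ‖fderiv ℝ (meanCorrection μ u c hr) x‖ₑ ^ p ∂μ := by
        refine (setLIntegral_eq_of_support_subset fun x hx => ?_).symm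
        have hx' : fderiv ℝ (meanCorrection μ u c hr) x ≠ 0 := fun h0 => hx (by
          simp [← ofReal_norm, h0, hp0])
        exact tsupport_meanCorrection_subset hr (support_fderiv_subset ℝ hx')
    _ ≤ ∫⁻ x in closedBall c (2 * r), 2 ^ (p - 1) * (R⁻¹ * ‖a - ‖u (foldBall c r x)‖‖ₑ ^ p +
          ‖fderiv ℝ u (foldBall c r x)‖ₑ ^ p) ∂μ :=
        lintegral_mono fun x =>
          enorm_fderiv_meanCorrection_rpow_le (hu.differentiable one_ne_zero) hr hp x
    _ ≤ (1 + 4 ^ Module.finrank ℝ E) * ∫⁻ x in closedBall c r,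
          2 ^ (p - 1) * (R⁻¹ * ‖a - ‖u x‖‖ₑ ^ p + ‖fderiv ℝ u x‖ₑ ^ p) ∂μ :=
        setLIntegral_comp_foldBall_le hr
          fun z => 2 ^ (p - 1) * (R⁻¹ * ‖a - ‖u z‖‖ₑ ^ p + ‖fderiv ℝ u z‖ₑ ^ p)
    _ = (1 + 4 ^ Module.finrank ℝ E) * (2 ^ (p - 1) *
          (R⁻¹ * ∫⁻ x in closedBall c r, ‖a - ‖u x‖‖ₑ ^ p ∂μ + D)) := by
        rw [lintegral_const_mul' _ _ (by finiteness), lintegral_add_right', lintegral_const_mul'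
          _ _ (by finiteness)]
        exact ((hu.continuous_fderiv one_ne_zero).enorm.aemeasurable.pow_const p)
    _ ≤ (1 + 4 ^ Module.finrank ℝ E) * (2 ^ (p - 1) *
          (R⁻¹ * (2 ^ Module.finrank ℝ E * 2 ^ p * R * D) + D)) := by gcongr
    _ = (1 + 4 ^ Module.finrank ℝ E) * (2 ^ (p - 1) *
          (R * R⁻¹ * (2 ^ Module.finrank ℝ E * 2 ^ p) * D + D)) := by ring
    _ = _ := by rw [ENNReal.mul_inv_cancel hR0 hRtop]; ring

end MeanCorrection

/-! ### The capacitary weak type estimate -/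

section WeakType

theorem exists_finset_cover_ball_sum_setLIntegral_le (α : Type*) [MetricSpace α]
    [HasBesicovitchCovering α] [MeasurableSpace α] [OpensMeasurableSpace α] :
    ∃ N : ℕ, ∀ {S : Set α}, IsCompact S → ∀ {r : S → ℝ} {R : ℝ}, (∀ x, 0 < r x) → (∀ x, r x ≤ R) →
      ∃ T : Finset S, S ⊆ ⋃ x ∈ T, ball (x : α) (r x) ∧ ∀ (μ : Measure α) (K : α → ℝ≥0∞),
        ∑ x ∈ T, ∫⁻ y in closedBall (x : α) (r x), K y ∂μ ≤ N * ∫⁻ y, K y ∂μ := by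
  classical
  obtain ⟨N, τ, hτ, hN⟩ := HasBesicovitchCovering.no_satelliteConfig (α := α)
  refine ⟨N, fun {S} hS {r R} hr0 hrR => ?_⟩
  obtain ⟨s, hdisj, hcover⟩ := Besicovitch.exist_disjoint_covering_families hτ hN
    { c := fun x : S => (x : α), r := r, rpos := hr0, r_bound := R, r_le := hrR }
  rw [Subtype.range_coe] at hcover
  obtain ⟨b, hbs, hb, hSb⟩ := hS.elim_finite_subcover_image (b := ⋃ i, s i)
    (c := fun x : S => ball (x : α) (r x)) (fun _ _ => isOpen_ball)
    (hcover.trans (by simp only [biUnion_iUnion, subset_rfl]))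
  lift b to Finset S using hb
  refine ⟨b, hSb, fun μ K => ?_⟩
  choose i hi using fun x : b => mem_iUnion.1 (hbs x.2)
  rw [← Finset.sum_coe_sort, ← Finset.sum_fiberwise _ i]
  calc ∑ k, ∑ x with i x = k, ∫⁻ y in closedBall (x : α) (r x), K y ∂μ
      ≤ ∑ _k : Fin N, ∫⁻ y, K y ∂μ := Finset.sum_le_sum fun k _ => ?_
    _ = N * ∫⁻ y, K y ∂μ := by simp
  have hmem : ∀ x ∈ ({x | i x = k} : Finset b), (x : S) ∈ s k := fun x hx =>
    (Finset.mem_filter.1 hx).2 ▸ hi x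
  rw [← lintegral_biUnion_finset (fun x hx y hy hxy => hdisj k (hmem x hx) (hmem y hy)
    (Subtype.coe_ne_coe.2 hxy)) fun _ _ => measurableSet_closedBall]
  exact setLIntegral_le_lintegral _ _

section Haar

variable {E F : Type*} [NormedAddCommGroup E] [NormedSpace ℝ E] [FiniteDimensional ℝ E]
  [MeasurableSpace E] [BorelSpace E] {μ : Measure E} [μ.IsAddHaarMeasure] [NormedAddCommGroup F]
  {u : E → F}

theorem exists_bounded_radius_of_lt_maximalFn {S : Set E} (hS : IsCompact S) {t : ℝ≥0∞}
    (h : ∀ x ∈ S, t < maximalFn μ u x) : ∃ (r : S → ℝ) (R : ℝ), (∀ x, 0 < r x) ∧ (∀ x, r x ≤ R) ∧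
      ∀ x : S, t < ⨍⁻ y in ball (x : E) (r x), ‖u y‖ₑ ∂μ := by
  suffices ∃ R : ℝ, ∀ x ∈ S, ∃ r, 0 < r ∧ r ≤ R ∧ t < ⨍⁻ y in ball x r, ‖u y‖ₑ ∂μ by
    obtain ⟨R, hR⟩ := this
    choose r hr0 hrR hrt using fun x : S => hR x x.2
    exact ⟨r, R, hr0, hrR, hrt⟩
  refine hS.induction_on ⟨0, by simp⟩ ?_ ?_ fun x hx => ?_
  · exact fun A B hAB ⟨R, hR⟩ => ⟨R, fun x hx => hR x (hAB hx)⟩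
  · rintro A B ⟨R, hR⟩ ⟨R', hR'⟩
    refine ⟨max R R', fun x hx => hx.elim (fun hx => ?_) fun hx => ?_⟩
    · exact (hR x hx).imp fun r hr => ⟨hr.1, hr.2.1.trans (le_max_left _ _), hr.2.2⟩
    · exact (hR' x hx).imp fun r hr => ⟨hr.1, hr.2.1.trans (le_max_right _ _), hr.2.2⟩
  · obtain ⟨r, hr, hxr⟩ : ∃ r, 0 < r ∧ t < ⨍⁻ y in ball x r, ‖u y‖ₑ ∂μ := by
      simpa [maximalFn, lt_iSup_iff] using h x hx
    exact ⟨_, mem_nhdsWithin_of_mem_nhds ((isOpen_lt_laverage_ball _ t hr).mem_nhds hxr), r,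
      fun y hy => ⟨r, hr, le_rfl, hy⟩⟩

theorem ball_ae_eq_closedBall (x : E) {r : ℝ} (hr : 0 < r) : ball x r =ᵐ[μ] closedBall x r :=
  ae_eq_of_subset_of_measure_ge ball_subset_closedBall
    (by rw [Measure.addHaar_closedBall μ x hr.le, Measure.addHaar_ball_of_pos μ x hr])
    measurableSet_ball.nullMeasurableSet measure_closedBall_lt_top.ne

theorem laverage_ball_eq_ofReal_average_closedBall (hu : Continuous u) (x : E) {r : ℝ}
    (hr : 0 < r) :
    ⨍⁻ y in ball x r, ‖u y‖ₑ ∂μ = ENNReal.ofReal (⨍ y in closedBall x r, ‖u y‖ ∂μ) := by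
  rw [setLAverage_congr (ball_ae_eq_closedBall x hr), ofReal_setAverage
    (hu.norm.continuousOn.integrableOn_compact (isCompact_closedBall x r))
    (ae_of_all _ fun _ => norm_nonneg _), setLAverage_eq]
  simp only [ofReal_norm]

end Haar

variable {n : ℕ} {p : ℝ} {u : En n → ℝ}

theorem capK_setOf_le_le_of_lipschitzWith (hp : 1 ≤ p) {w : En n → ℝ} {L : ℝ≥0}
    (hL : LipschitzWith L w) (hc : HasCompactSupport w) {s : ℝ} (hs : 0 < s) :
    capK p {x | s ≤ w x} ≤ (ENNReal.ofReal s ^ p)⁻¹ * ∫⁻ x, ‖fderiv ℝ w x‖ₑ ^ p := by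
  have hp0 : 0 ≤ p := zero_le_one.trans hp
  refine (capK_le_of_lipschitzWith hp ((lipschitzWith_smul s⁻¹).comp hL) (hc.comp_left (by simp))
    fun x hx => ?_).trans_eq ?_
  · exact (one_le_inv_mul₀ hs).2 hx
  · rw [← lintegral_const_mul' _ _ (by simp [hs])]
    refine lintegral_congr fun x => ?_
    rw [show (s⁻¹ • ·) ∘ w = s⁻¹ • w from rfl, fderiv_const_smul_field, Pi.smul_apply, enorm_smul,
      ENNReal.mul_rpow_of_nonneg _ _ hp0, ← ENNReal.inv_rpow, ← ENNReal.ofReal_inv_of_pos hs,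
      Real.enorm_of_nonneg (by positivity)]

theorem capK_setOf_le_abs_le (hp : 1 ≤ p) (hu : ContDiff ℝ 1 u) (hc : HasCompactSupport u) {s : ℝ}
    (hs : 0 < s) :
    capK p {x | s ≤ |u x|} ≤ 2 * ((ENNReal.ofReal s ^ p)⁻¹ * ∫⁻ x, ‖fderiv ℝ u x‖ₑ ^ p) := by
  obtain ⟨L, hL⟩ := hu.lipschitzWith_of_hasCompactSupport hc one_ne_zero
  have hset : {x | s ≤ |u x|} = {x | s ≤ u x} ∪ {x | s ≤ (-u) x} := by
    ext x
    simp [le_abs]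
  have hneg : ∫⁻ x, ‖fderiv ℝ (-u) x‖ₑ ^ p = ∫⁻ x, ‖fderiv ℝ u x‖ₑ ^ p := by
    simp only [fderiv_neg, enorm_neg]
  rw [hset, two_mul]
  refine (capK_union_le hp _ _).trans (add_le_add ?_ ?_)
  · exact capK_setOf_le_le_of_lipschitzWith hp hL hc hs
  · rw [← hneg]
    exact capK_setOf_le_le_of_lipschitzWith hp hL.neg hc.neg hs

theorem exists_capK_setOf_le_meanCorrection_le (n : ℕ) (hp : 1 ≤ p) :
    ∃ C : ℝ≥0∞, C ≠ ∞ ∧ ∀ {u : En n → ℝ}, ContDiff ℝ 1 u → ∀ (c : En n) {r : ℝ} (hr : 0 < r)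
      {s : ℝ}, 0 < s → capK p {x | s ≤ meanCorrection volume u c hr x} ≤
        C * (ENNReal.ofReal s ^ p)⁻¹ * ∫⁻ x in closedBall c r, ‖fderiv ℝ u x‖ₑ ^ p := by
  refine ⟨(1 + 4 ^ Module.finrank ℝ (En n)) * (2 ^ (p - 1) *
    (2 ^ Module.finrank ℝ (En n) * 2 ^ p + 1)), by finiteness, fun {u} hu c {r} hr {s} hs => ?_⟩
  obtain ⟨L, hL⟩ := exists_lipschitzWith_meanCorrection (μ := volume) (c := c) hu hr
  refine (capK_setOf_le_le_of_lipschitzWith hp hL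
    ((isCompact_closedBall c (2 * r)).of_isClosed_subset (isClosed_tsupport _)
      (tsupport_meanCorrection_subset hr)) hs).trans ?_
  rw [mul_comm _ (_⁻¹), mul_assoc]
  gcongr
  exact lintegral_enorm_fderiv_meanCorrection_rpow_le hu hr hp

theorem exists_capOpen_lt_maximalFn_le (n : ℕ) (hp : 1 ≤ p) :
    ∃ C : ℝ≥0∞, C ≠ ∞ ∧ ∀ {u : En n → ℝ}, ContDiff ℝ 1 u → HasCompactSupport u → ∀ {t : ℝ}, 0 < t →
      capOpen p {x | ENNReal.ofReal t < maximalFn volume u x} ≤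
        C * (ENNReal.ofReal (t / 2) ^ p)⁻¹ * ∫⁻ x, ‖fderiv ℝ u x‖ₑ ^ p := by
  obtain ⟨N, hN⟩ := exists_finset_cover_ball_sum_setLIntegral_le (En n)
  obtain ⟨C, hC, hcorr⟩ := exists_capK_setOf_le_meanCorrection_le n hp
  refine ⟨2 + C * N, by finiteness, fun {u} hu hc {t} ht => iSup₂_le fun S ⟨hSt, hS⟩ => ?_⟩
  obtain ⟨r, R, hr0, hrR, hrt⟩ := exists_bounded_radius_of_lt_maximalFn (μ := volume) hS hSt
  obtain ⟨T, hST, hT⟩ := hN hS hr0 hrR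
  set s := (ENNReal.ofReal (t / 2) ^ p)⁻¹
  set D := ∫⁻ x, ‖fderiv ℝ u x‖ₑ ^ p
  let A : S → Set (En n) := fun c => {x | t / 2 ≤ meanCorrection volume u c (hr0 c) x}
  have hcover : S ⊆ {x | t / 2 ≤ |u x|} ∪ ⋃ c ∈ T, A c := by
    intro x hx
    obtain ⟨c, hcT, hxc⟩ := mem_iUnion₂.1 (hST hx)
    have hmean := hrt c
    rw [laverage_ball_eq_ofReal_average_closedBall hu.continuous _ (hr0 c),
      ENNReal.ofReal_lt_ofReal_iff_of_nonneg ht.le] at hmean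
    refine or_iff_not_imp_left.2 fun hux => mem_iUnion₂.2 ⟨c, hcT, ?_⟩
    simp only [A, mem_ofPred_eq, meanCorrection_of_mem_closedBall _ (ball_subset_closedBall hxc),
      Real.norm_eq_abs] at hux hmean ⊢
    linarith
  calc capK p S ≤ capK p ({x | t / 2 ≤ |u x|} ∪ ⋃ c ∈ T, A c) := capK_mono hcover
    _ ≤ capK p {x | t / 2 ≤ |u x|} + ∑ c ∈ T, capK p (A c) :=
        (capK_union_le hp _ _).trans (add_le_add_right (capK_biUnion_finset_le hp _ _) _)
    _ ≤ 2 * (s * D) + ∑ c ∈ T, C * s * ∫⁻ x in closedBall (c : En n) (r c), ‖fderiv ℝ u x‖ₑ ^ p :=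
        add_le_add (capK_setOf_le_abs_le hp hu hc (half_pos ht))
          (Finset.sum_le_sum fun c _ => hcorr hu c _ (half_pos ht))
    _ ≤ 2 * (s * D) + C * s * (N * D) := by
        rw [← Finset.mul_sum]
        gcongr
        exact hT volume _
    _ = (2 + C * N) * s * D := by ring

end WeakType

/-! ### Weak derivatives: measurability and truncation -/

section WeakDerivatives

open scoped Gradient

theorem integrable_norm_rpow_iff_memLp_ofReal {α F : Type*} [MeasurableSpace α] {μ : Measure α}
    [NormedAddCommGroup F] {w : α → F} (hw : AEStronglyMeasurable w μ) {p : ℝ} (hp : 0 < p) :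
    Integrable (fun x => ‖w x‖ ^ p) μ ↔ MemLp w (ENNReal.ofReal p) μ := by
  rw [← integrable_norm_rpow_iff hw (by simpa) ENNReal.ofReal_ne_top, ENNReal.toReal_ofReal hp.le]

theorem memLp_of_norm_le_norm_mul_norm {α F G H : Type*} [TopologicalSpace α] [MeasurableSpace α]
    [OpensMeasurableSpace α] {μ : Measure α} [NormedAddCommGroup F] [NormedAddCommGroup G]
    [NormedAddCommGroup H] {ψ : α → F} {w : α → G} {u : α → H} {q : ℝ≥0∞} (hψ : Continuous ψ)
    (hc : HasCompactSupport ψ) (hw : MemLp w q (μ.restrict (tsupport ψ)))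
    (hu : AEStronglyMeasurable u μ) (h : ∀ x, ‖u x‖ ≤ ‖ψ x‖ * ‖w x‖) : MemLp u q μ := by
  obtain ⟨C, hC⟩ := hψ.bounded_above_of_compact_support hc
  refine ((memLp_indicator_iff_restrict (isClosed_tsupport ψ).measurableSet).2 hw).of_le_mul
    (c := C) hu (ae_of_all _ fun x => (h x).trans ?_)
  by_cases hx : x ∈ tsupport ψ
  · rw [indicator_of_mem hx]
    exact mul_le_mul_of_nonneg_right (hC x) (norm_nonneg _)
  · simp [image_eq_zero_of_notMem_tsupport hx, hx]

theorem integrable_mul_of_tsupport_subset {X : Type*} [TopologicalSpace X] [MeasurableSpace X]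
    [OpensMeasurableSpace X] [T2Space X] {μ : Measure X} {U : Set X} {k ψ : X → ℝ}
    (hk : LocallyIntegrableOn k U μ) (hψ : Continuous ψ) (hc : HasCompactSupport ψ)
    (hU : tsupport ψ ⊆ U) : Integrable (fun x => k x * ψ x) μ := by
  refine (integrableOn_iff_integrable_of_support_subset fun x hx => ?_).1
    ((hk.integrableOn_compact_subset hU hc).mul_continuousOn hψ.continuousOn hc)
  exact subset_tsupport ψ (right_ne_zero_of_mul hx)

theorem exists_monotone_isCompact_iUnion_eq {X : Type*} [TopologicalSpace X]
    [LocallyCompactSpace X] [SecondCountableTopology X] {U : Set X} (hU : IsOpen U) :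
    ∃ K : ℕ → Set X, (∀ j, IsCompact (K j)) ∧ Monotone K ∧ ⋃ j, K j = U := by
  have := hU.locallyCompactSpace
  let K : CompactExhaustion U := default
  refine ⟨fun j => Subtype.val '' K j, fun j => (K.isCompact j).image continuous_subtype_val,
    fun i j hij => image_mono (K.subset hij), ?_⟩
  rw [← image_iUnion, K.iUnion_eq, image_univ, Subtype.range_coe]

variable {n : ℕ} {p : ℝ} {Ω : Set (En n)} {k m : En n → ℝ} {χ η : En n → ℝ} {v : En n}

theorem gradient_apply_eq_fderiv (χ : En n → ℝ) (x : En n) (i : Fin n) :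
    (∇ χ x) i = fderiv ℝ χ x (EuclideanSpace.single i 1) := by
  rw [← inner_gradient_left, EuclideanSpace.inner_single_right]
  simp

theorem IsTest.mul (hχ : IsTest Ω χ) (hη : ContDiff ℝ (⊤ : ℕ∞) η) :
    IsTest Ω (fun x => χ x * η x) :=
  ⟨hχ.1.mul hη, hχ.2.1.mul_right, (tsupport_mul_subset_left).trans hχ.2.2⟩

theorem IsTest.add (hχ : IsTest Ω χ) (hη : IsTest Ω η) : IsTest Ω (χ + η) :=
  ⟨hχ.1.add hη.1, hχ.2.1.add hη.2.1, (tsupport_add _ _).trans (union_subset hχ.2.2 hη.2.2)⟩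

theorem IsTest.fderiv_apply (hχ : IsTest Ω χ) (v : En n) :
    IsTest Ω (fun x => fderiv ℝ χ x v) :=
  ⟨(hχ.1.fderiv_right (m := (⊤ : ℕ∞)) (by simp)).clm_apply contDiff_const,
    hχ.2.1.fderiv_apply ℝ v, (tsupport_fderiv_apply_subset ℝ v).trans hχ.2.2⟩

theorem IsTest.integrable_mul (hη : IsTest Ω η) (hk : LocallyIntegrableOn k Ω) :
    Integrable (fun x => k x * η x) :=
  integrable_mul_of_tsupport_subset hk hη.1.continuous hη.2.1 hη.2.2

theorem exists_isTest_eventually_eq_one {K : Set (En n)} (hK : IsCompact K) (hΩ : IsOpen Ω)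
    (hKΩ : K ⊆ Ω) : ∃ χ : En n → ℝ, IsTest Ω χ ∧ ∀ x ∈ K, ∀ᶠ y in 𝓝 x, χ y = 1 := by
  obtain ⟨L, hL, hKL, hLΩ⟩ := exists_compact_between hK hΩ hKΩ
  obtain ⟨χ, hχ1, hχ0, -⟩ := exists_contMDiffMap_one_nhds_of_subset_interior
    (n := (⊤ : ℕ∞)) (modelWithCornersSelf ℝ (En n)) hK.isClosed hKL
  have hsupp : tsupport χ ⊆ L :=
    closure_minimal (fun x hx => not_imp_comm.1 (hχ0 x) hx) hL.isClosed
  exact ⟨χ, ⟨χ.contMDiff.contDiff, hL.of_isClosed_subset (isClosed_tsupport _) hsupp,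
    hsupp.trans hLΩ⟩, fun x hx => hχ1.filter_mono (nhds_le_nhdsSet hx)⟩

theorem aestronglyMeasurable_indicator_of_isTest (hΩ : IsOpen Ω)
    (h : ∀ η, IsTest Ω η → AEStronglyMeasurable (fun x => m x * η x)) :
    AEStronglyMeasurable (Ω.indicator m) := by
  rw [aestronglyMeasurable_indicator_iff hΩ.measurableSet]
  obtain ⟨K, hK, -, hKΩ⟩ := exists_monotone_isCompact_iUnion_eq hΩ
  rw [← hKΩ, aestronglyMeasurable_iUnion_iff]
  intro j
  obtain ⟨χ, hχ, hχ1⟩ := exists_isTest_eventually_eq_one (hK j) hΩ (hKΩ ▸ subset_iUnion K j)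
  refine (h χ hχ).restrict.congr ((ae_restrict_mem (hK j).measurableSet).mono fun x hx => ?_)
  simp [(hχ1 x hx).self_of_nhds]

namespace HasWeakPartialOn

theorem indicator (hkm : HasWeakPartialOn Ω k m v) : HasWeakPartialOn Ω k (Ω.indicator m) v := by
  intro η hη
  rw [hkm η hη]
  congr 2 with x
  by_cases hx : x ∈ Ω
  · rw [indicator_of_mem hx]
  · simp [image_eq_zero_of_notMem_tsupport fun h => hx (hη.2.2 h)]

-- If `m * η₀` is not measurable, neither is `m * (η₀ + η)` for measurable `m * η`, and the
-- integrals of non-measurable functions are `0` by convention.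
theorem zero_of_not_aestronglyMeasurable (hk : LocallyIntegrableOn k Ω)
    (hkm : HasWeakPartialOn Ω k m v) {η₀ : En n → ℝ} (hη₀ : IsTest Ω η₀)
    (hm : ¬ AEStronglyMeasurable (fun x => m x * η₀ x)) : HasWeakPartialOn Ω k 0 v := by
  have hzero (η : En n → ℝ) (hη : IsTest Ω η) (h : ¬ AEStronglyMeasurable fun x => m x * η x) :
      ∫ x, k x * fderiv ℝ η x v = 0 := by
    rw [hkm η hη, integral_undef fun hi => h hi.1, neg_zero]
  intro η hη
  simp only [Pi.zero_apply, zero_mul, integral_zero, neg_zero]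
  by_cases hmη : AEStronglyMeasurable fun x => m x * η x
  · have hsum : ∫ x, k x * fderiv ℝ (η₀ + η) x v = 0 := hzero _ (hη₀.add hη) fun h => hm <|
      (h.sub hmη).congr (ae_of_all _ fun x => by simp [mul_add])
    have hadd (x : En n) : k x * fderiv ℝ (η₀ + η) x v =
        k x * fderiv ℝ η₀ x v + k x * fderiv ℝ η x v := by
      rw [fderiv_add (hη₀.1.differentiable (by simp) x) (hη.1.differentiable (by simp) x),
        add_apply, mul_add]
    rwa [integral_congr_ae (ae_of_all _ hadd), integral_add ((hη₀.fderiv_apply v).integrable_mul hk)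
      ((hη.fderiv_apply v).integrable_mul hk), hzero _ hη₀ hm, zero_add] at hsum
  · exact hzero η hη hmη

theorem exists_aestronglyMeasurable (hΩ : IsOpen Ω) (hk : LocallyIntegrableOn k Ω)
    (hkm : HasWeakPartialOn Ω k m v) : ∃ m' : En n → ℝ, AEStronglyMeasurable m' ∧
      HasWeakPartialOn Ω k m' v ∧ ∀ x, |m' x| ≤ |m x| := by
  by_cases h : ∀ η, IsTest Ω η → AEStronglyMeasurable fun x => m x * η x
  · exact ⟨Ω.indicator m, aestronglyMeasurable_indicator_of_isTest hΩ h, hkm.indicator,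
      fun x => norm_indicator_le_norm_self m x⟩
  · push Not at h
    obtain ⟨η₀, hη₀, hm⟩ := h
    exact ⟨0, aestronglyMeasurable_zero, hkm.zero_of_not_aestronglyMeasurable hk hη₀ hm, by simp⟩

theorem add {k' m' : En n → ℝ} (hk : LocallyIntegrableOn k Ω) (hm : LocallyIntegrableOn m Ω)
    (hk' : LocallyIntegrableOn k' Ω) (hm' : LocallyIntegrableOn m' Ω)
    (hkm : HasWeakPartialOn Ω k m v) (hkm' : HasWeakPartialOn Ω k' m' v) :
    HasWeakPartialOn Ω (fun x => k x + k' x) (fun x => m x + m' x) v := by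
  intro η hη
  simp only [add_mul]
  rw [integral_add ((hη.fderiv_apply v).integrable_mul hk) ((hη.fderiv_apply v).integrable_mul hk'),
    integral_add (hη.integrable_mul hm) (hη.integrable_mul hm'), hkm η hη, hkm' η hη, neg_add]

theorem mul (hk : LocallyIntegrableOn k Ω) (hm : LocallyIntegrableOn m Ω)
    (hkm : HasWeakPartialOn Ω k m v) (hχ : IsTest Ω χ) : HasWeakPartialOn univ
      (fun x => χ x * k x) (fun x => χ x * m x + k x * fderiv ℝ χ x v) v := by
  intro η hη
  have hprod (x : En n) : χ x * k x * fderiv ℝ η x v =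
      k x * fderiv ℝ (fun y => χ y * η y) x v - k x * (fderiv ℝ χ x v * η x) := by
    rw [fderiv_fun_mul (hχ.1.differentiable (by simp) x) (hη.1.differentiable (by simp) x)]
    simp only [add_apply, smul_apply, smul_eq_mul]
    ring
  have hχη := hχ.mul hη.1
  have hdχ := ((hχ.fderiv_apply v).mul hη.1).integrable_mul hk
  calc ∫ x, χ x * k x * fderiv ℝ η x v
      = -(∫ x, m x * (χ x * η x)) - ∫ x, k x * (fderiv ℝ χ x v * η x) := by
        rw [integral_congr_ae (ae_of_all _ hprod),
          integral_sub ((hχη.fderiv_apply v).integrable_mul hk) hdχ, hkm _ hχη]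
    _ = -∫ x, (χ x * m x + k x * fderiv ℝ χ x v) * η x := by
        rw [← neg_add', ← integral_add (hχη.integrable_mul hm) hdχ]
        congr 2 with x
        ring

end HasWeakPartialOn

section Sobolev

variable {f f' : En n → ℝ} {g g' : En n → En n}

theorem MemW1p.memLp (hf : MemW1p p f g) (hp : 0 < p) :
    MemLp f (ENNReal.ofReal p) ∧ MemLp g (ENNReal.ofReal p) :=
  ⟨(integrable_norm_rpow_iff_memLp_ofReal hf.1 hp).1 hf.2.2.2.1,
    (integrable_norm_rpow_iff_memLp_ofReal hf.2.1 hp).1 hf.2.2.2.2⟩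

theorem memW1p_of_memLp (hp : 0 < p) (hf : MemLp f (ENNReal.ofReal p))
    (hg : MemLp g (ENNReal.ofReal p)) (hfg : HasWeakGradientOn univ f g) : MemW1p p f g :=
  ⟨hf.1, hg.1, hfg, (integrable_norm_rpow_iff_memLp_ofReal hf.1 hp).2 hf,
    (integrable_norm_rpow_iff_memLp_ofReal hg.1 hp).2 hg⟩

theorem memLp_apply {μ : Measure (En n)} {q : ℝ≥0∞} (hg : MemLp g q μ) (i : Fin n) :
    MemLp (fun x => g x i) q μ :=
  (EuclideanSpace.proj (𝕜 := ℝ) i).comp_memLp' hg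

theorem MemW1p.locallyIntegrable (hf : MemW1p p f g) (hp : 1 ≤ p) :
    LocallyIntegrable f ∧ ∀ i, LocallyIntegrable fun x => g x i := by
  have hmem := hf.memLp (zero_lt_one.trans_le hp)
  exact ⟨hmem.1.locallyIntegrable (ENNReal.one_le_ofReal.2 hp),
    fun i => (memLp_apply hmem.2 i).locallyIntegrable (ENNReal.one_le_ofReal.2 hp)⟩

theorem MemW1p.add (hp : 1 ≤ p) (hf : MemW1p p f g) (hf' : MemW1p p f' g') :
    MemW1p p (fun x => f x + f' x) (fun x => g x + g' x) := by
  have hp0 : 0 < p := zero_lt_one.trans_le hp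
  refine memW1p_of_memLp hp0 ((hf.memLp hp0).1.add (hf'.memLp hp0).1)
    ((hf.memLp hp0).2.add (hf'.memLp hp0).2) fun i => ?_
  exact (hf.2.2.1 i).add ((hf.locallyIntegrable hp).1.locallyIntegrableOn _)
    (((hf.locallyIntegrable hp).2 i).locallyIntegrableOn _)
    ((hf'.locallyIntegrable hp).1.locallyIntegrableOn _)
    (((hf'.locallyIntegrable hp).2 i).locallyIntegrableOn _) (hf'.2.2.1 i)

theorem MemW1pLoc.memLp_restrict (hf : MemW1pLoc p Ω f g) (hp : 0 < p) {K : Set (En n)}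
    (hKΩ : K ⊆ Ω) (hK : IsCompact K) : MemLp f (ENNReal.ofReal p) (volume.restrict K) ∧
      MemLp g (ENNReal.ofReal p) (volume.restrict K) :=
  ⟨(integrable_norm_rpow_iff_memLp_ofReal hf.1.restrict hp).1 (hf.2.2.2 K hKΩ hK).1,
    (integrable_norm_rpow_iff_memLp_ofReal hf.2.1.restrict hp).1 (hf.2.2.2 K hKΩ hK).2⟩

theorem MemW1pLoc.locallyIntegrableOn (hf : MemW1pLoc p Ω f g) (hp : 1 ≤ p) (hΩ : IsOpen Ω) :
    LocallyIntegrableOn f Ω ∧ ∀ i, LocallyIntegrableOn (fun x => g x i) Ω := by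
  have hint {w : En n → ℝ} {K : Set (En n)} (hK : IsCompact K)
      (hw : MemLp w (ENNReal.ofReal p) (volume.restrict K)) : IntegrableOn w K :=
    have : IsFiniteMeasure (volume.restrict K) := ⟨by simpa using hK.measure_lt_top⟩
    hw.integrable (ENNReal.one_le_ofReal.2 hp)
  have hmem (K : Set (En n)) (hKΩ : K ⊆ Ω) (hK : IsCompact K) :=
    hf.memLp_restrict (zero_lt_one.trans_le hp) hKΩ hK
  simp only [locallyIntegrableOn_iff hΩ.isLocallyClosed]
  exact ⟨fun K hKΩ hK => hint hK (hmem K hKΩ hK).1,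
    fun i K hKΩ hK => hint hK (memLp_apply (hmem K hKΩ hK).2 i)⟩

theorem MemW1pLoc.mul (hp : 1 ≤ p) (hΩ : IsOpen Ω) (hf : MemW1pLoc p Ω f g) (hχ : IsTest Ω χ) :
    MemW1p p (fun x => χ x * f x) (fun x => χ x • g x + f x • ∇ χ x) := by
  have hp0 : 0 < p := zero_lt_one.trans_le hp
  have hmem := hf.memLp_restrict hp0 hχ.2.2 hχ.2.1
  have hdχ : Continuous (fderiv ℝ χ) := hχ.1.continuous_fderiv (by simp)
  have hgrad : Continuous (∇ χ) := (InnerProductSpace.toDual ℝ (En n)).symm.continuous.comp hdχ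
  refine memW1p_of_memLp hp0 ?_ (.add ?_ ?_) fun i => ?_
  · exact memLp_of_norm_le_norm_mul_norm hχ.1.continuous hχ.2.1 hmem.1
      (hχ.1.continuous.aestronglyMeasurable.mul hf.1) fun x => (norm_mul _ _).le
  · exact memLp_of_norm_le_norm_mul_norm hχ.1.continuous hχ.2.1 hmem.2
      (hχ.1.continuous.aestronglyMeasurable.smul hf.2.1) fun x => (norm_smul _ _).le
  · refine memLp_of_norm_le_norm_mul_norm hdχ (hχ.2.1.fderiv ℝ)
      (hmem.1.mono_measure (Measure.restrict_mono (tsupport_fderiv_subset ℝ) le_rfl))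
      (hf.1.smul hgrad.aestronglyMeasurable) fun x => ?_
    rw [norm_smul, mul_comm, ← toDual_gradient, LinearIsometryEquiv.norm_map]
  · simpa [gradient_apply_eq_fderiv] using (hf.2.2.1 i).mul (hf.locallyIntegrableOn hp hΩ).1
      ((hf.locallyIntegrableOn hp hΩ).2 i) hχ

theorem norm_le_norm_of_forall_abs_le {x y : En n} (h : ∀ i, |x i| ≤ |y i|) : ‖x‖ ≤ ‖y‖ := by
  rw [EuclideanSpace.norm_eq, EuclideanSpace.norm_eq]
  gcongr with i
  exact h i

theorem aestronglyMeasurable_toLp {m : Fin n → En n → ℝ} (hm : ∀ i, AEStronglyMeasurable (m i)) :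
    AEStronglyMeasurable fun x => (WithLp.toLp 2 fun i => m i x : En n) :=
  (PiLp.continuous_toLp 2 _).comp_aestronglyMeasurable
    (aemeasurable_pi_lambda _ fun i => (hm i).aemeasurable).aestronglyMeasurable

theorem MemW2pLoc.memW1pLoc {h : En n → Fin n → En n} (hf : MemW2pLoc p Ω f g h) :
    MemW1pLoc p Ω f g :=
  ⟨hf.1, hf.2.1, hf.2.2.1, fun K hKΩ hK => (hf.2.2.2.2 K hKΩ hK).imp_right And.left⟩

theorem MemW2pLoc.exists_memW1pLoc_gradient (hp : 1 ≤ p) (hΩ : IsOpen Ω)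
    {h : En n → Fin n → En n} (hf : MemW2pLoc p Ω f g h) :
    ∃ H : Fin n → En n → En n, ∀ i, MemW1pLoc p Ω (fun x => g x i) (H i) := by
  have hp0 : 0 ≤ p := zero_le_one.trans hp
  obtain ⟨-, hgm, -, hgh, hint⟩ := id hf
  choose m hm hgm' hmh using fun i j => (hgh i j).exists_aestronglyMeasurable hΩ
    ((hf.memW1pLoc.locallyIntegrableOn hp hΩ).2 i)
  have hgi (i : Fin n) : AEStronglyMeasurable fun x => g x i :=
    (EuclideanSpace.proj (𝕜 := ℝ) i).continuous.comp_aestronglyMeasurable hgm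
  have hH (i : Fin n) := aestronglyMeasurable_toLp (hm i)
  refine ⟨fun i x => WithLp.toLp 2 fun j => m i j x, fun i => ⟨hgi i, hH i, hgm' i,
    fun K hKΩ hK => ⟨(hint K hKΩ hK).2.1.mono' ?_ (ae_of_all _ fun x => ?_),
      ((hint K hKΩ hK).2.2 i).mono' ?_ (ae_of_all _ fun x => ?_)⟩⟩⟩
  · exact ((hgi i).norm.aemeasurable.pow_const p).aestronglyMeasurable.restrict
  · rw [Real.norm_of_nonneg (by positivity)]
    exact Real.rpow_le_rpow (abs_nonneg _) (PiLp.norm_apply_le (g x) i) hp0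
  · exact ((hH i).norm.aemeasurable.pow_const p).aestronglyMeasurable.restrict
  · rw [Real.norm_of_nonneg (by positivity)]
    exact Real.rpow_le_rpow (norm_nonneg _) (norm_le_norm_of_forall_abs_le (hmh i · x)) hp0

theorem MemW2pLoc.exists_memW1p_mul (hp : 1 ≤ p) (hΩ : IsOpen Ω) {h : En n → Fin n → En n}
    (hf : MemW2pLoc p Ω f g h) (hχ : IsTest Ω χ) : ∃ (G : En n → En n) (H : Fin n → En n → En n),
      MemW1p p (fun x => χ x * f x) G ∧ (∀ i, MemW1p p (fun x => G x i) (H i)) ∧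
        HasCompactSupport G := by
  obtain ⟨H, hH⟩ := hf.exists_memW1pLoc_gradient hp hΩ
  have hG (i : Fin n) : ∃ Hi, MemW1p p (fun x => (χ x • g x + f x • ∇ χ x) i) Hi := by
    simp only [PiLp.add_apply, PiLp.smul_apply, smul_eq_mul, gradient_apply_eq_fderiv,
      mul_comm (f _)]
    exact ⟨_, ((hH i).mul hp hΩ hχ).add hp
      (hf.memW1pLoc.mul hp hΩ (hχ.fderiv_apply (EuclideanSpace.single i 1)))⟩
  choose H' hH' using hG
  have hgrad : HasCompactSupport (∇ χ) := by
    refine (hχ.2.1.fderiv ℝ).mono fun x hx => ?_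
    rw [Function.mem_support] at hx ⊢
    rwa [← toDual_gradient, map_ne_zero_iff _ (LinearIsometryEquiv.injective _)]
  have hsupp : HasCompactSupport fun x => χ x • g x + f x • ∇ χ x :=
    (hχ.2.1.smul_right (f' := g)).add (hgrad.smul_left (f := f))
  exact ⟨_, H', hf.memW1pLoc.mul hp hΩ hχ, hH', hsupp⟩

end Sobolev

end WeakDerivatives

/-! ### Mollification -/

section Mollification

open ContinuousLinearMap Convolution

theorem lintegral_enorm_rpow_eq_eLpNorm_rpow {α F : Type*} [MeasurableSpace α] {μ : Measure α}
    [NormedAddCommGroup F] {p : ℝ} (hp : 0 < p) (w : α → F) :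
    ∫⁻ x, ‖w x‖ₑ ^ p ∂μ = eLpNorm w (ENNReal.ofReal p) μ ^ p := by
  lift p to ℝ≥0 using hp.le
  rw [ENNReal.ofReal_coe_nnreal, eLpNorm_nnreal_pow_eq_lintegral (by exact_mod_cast hp.ne')]

section Convergence

variable {E : Type*} [NormedAddCommGroup E] [NormedSpace ℝ E] [FiniteDimensional ℝ E]
  [MeasurableSpace E] [BorelSpace E] {μ : Measure E} [μ.IsAddHaarMeasure] {p : ℝ} {k : E → ℝ}
  {ι : Type*} {l : Filter ι} {φ : ι → ContDiffBump (0 : E)}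

theorem contDiff_convolution_normed (φ : ContDiffBump (0 : E)) (hk : LocallyIntegrable k μ) :
    ContDiff ℝ (⊤ : ℕ∞) (φ.normed μ ⋆[lsmul ℝ ℝ, μ] k) :=
  φ.hasCompactSupport_normed.contDiff_convolution_left _ φ.contDiff_normed hk

theorem eLpNorm_convolution_normed_le (φ : ContDiffBump (0 : E)) (hk : AEStronglyMeasurable k μ)
    (hp : 1 ≤ p) : eLpNorm (φ.normed μ ⋆[lsmul ℝ ℝ, μ] k) (ENNReal.ofReal p) μ ≤
      eLpNorm k (ENNReal.ofReal p) μ := by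
  have hp0 : 0 < p := zero_lt_one.trans_le hp
  rw [← ENNReal.rpow_le_rpow_iff hp0, ← lintegral_enorm_rpow_eq_eLpNorm_rpow hp0,
    ← lintegral_enorm_rpow_eq_eLpNorm_rpow hp0]
  exact lintegral_enorm_convolution_normed_rpow_le φ hk hp

theorem norm_convolution_normed_sub_le_indicator_cthickening (φ : ContDiffBump (0 : E))
    (hk : Continuous k) {δ η : ℝ} (hφδ : φ.rOut ≤ δ)
    (hkη : ∀ x y, dist y x < δ → dist (k y) (k x) ≤ η) (x : E) :
    ‖(φ.normed μ ⋆[lsmul ℝ ℝ, μ] k) x - k x‖ ≤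
      (cthickening δ (tsupport k)).indicator (fun _ => η) x := by
  rw [← dist_eq_norm]
  refine φ.dist_normed_convolution_le hk.aestronglyMeasurable fun y hy => ?_
  replace hy : dist y x < δ := hy.trans_le hφδ
  by_cases hx : x ∈ cthickening δ (tsupport k)
  · simpa [hx] using hkη x y hy
  · have hk0 (z : E) (hz : dist x z ≤ δ) : k z = 0 :=
      image_eq_zero_of_notMem_tsupport fun hzk => hx (mem_cthickening_of_dist_le x z δ _ hzk hz)
    rw [indicator_of_notMem hx, hk0 y (dist_comm y x ▸ hy.le),
      hk0 x (by simpa using φ.rOut_pos.le.trans hφδ), dist_self]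

theorem tendsto_eLpNorm_convolution_normed_sub_of_continuous (hk : Continuous k)
    (hc : HasCompactSupport k) {q : ℝ≥0∞} (hq : q ≠ 0) (hq' : q ≠ ∞)
    (hφ : Tendsto (fun a => (φ a).rOut) l (𝓝 0)) :
    Tendsto (fun a => eLpNorm (((φ a).normed μ ⋆[lsmul ℝ ℝ, μ] k) - k) q μ) l (𝓝 0) := by
  rw [ENNReal.tendsto_nhds_zero]
  intro ε hε
  have hS : IsCompact (cthickening 1 (tsupport k)) := hc.isCompact.cthickening
  have hA : μ (cthickening 1 (tsupport k)) ^ (1 / q.toReal) ≠ ∞ :=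
    ENNReal.rpow_ne_top_of_nonneg (by positivity) hS.measure_lt_top.ne
  obtain ⟨η, hη, hηε⟩ := ENNReal.exists_nnreal_pos_mul_lt hA hε.ne'
  obtain ⟨δ, hδ, hδk⟩ :=
    Metric.uniformContinuous_iff.1 (hc.uniformContinuous_of_continuous hk) η hη
  filter_upwards [hφ.eventually (gt_mem_nhds (lt_min hδ one_pos))] with a ha
  have hbound := norm_convolution_normed_sub_le_indicator_cthickening (μ := μ) (φ a) hk ha.le
    fun x y hxy => (hδk (hxy.trans_le (min_le_left _ _))).le
  calc eLpNorm (((φ a).normed μ ⋆[lsmul ℝ ℝ, μ] k) - k) q μ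
      ≤ eLpNorm ((cthickening 1 (tsupport k)).indicator fun _ => (η : ℝ)) q μ :=
        eLpNorm_mono_real fun x => (hbound x).trans <|
          indicator_le_indicator_of_subset (cthickening_mono (min_le_right _ _) _)
            (fun _ => η.coe_nonneg) x
    _ = η * μ (cthickening 1 (tsupport k)) ^ (1 / q.toReal) := by
        rw [eLpNorm_indicator_const hS.measurableSet hq hq']
        simp
    _ ≤ ε := hηε.le

theorem tendsto_eLpNorm_convolution_normed_sub (hp : 1 ≤ p) (hk : MemLp k (ENNReal.ofReal p) μ)
    (hφ : Tendsto (fun a => (φ a).rOut) l (𝓝 0)) :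
    Tendsto (fun a => eLpNorm (((φ a).normed μ ⋆[lsmul ℝ ℝ, μ] k) - k) (ENNReal.ofReal p) μ) l
      (𝓝 0) := by
  have hq : 1 ≤ ENNReal.ofReal p := ENNReal.one_le_ofReal.2 hp
  rw [ENNReal.tendsto_nhds_zero]
  intro ε hε
  have hε3 : 0 < ε / 3 := ENNReal.div_pos hε.ne' (by simp)
  obtain ⟨g, hgc, hgk, hg, -⟩ :=
    hk.exists_hasCompactSupport_eLpNorm_sub_le ENNReal.ofReal_ne_top hε3.ne'
  have hgl : LocallyIntegrable g μ := hg.locallyIntegrable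
  have hkgl : LocallyIntegrable (k - g) μ := (hk.locallyIntegrable hq).sub hgl
  have hkgm : AEStronglyMeasurable (k - g) μ := hk.1.sub hg.aestronglyMeasurable
  filter_upwards [ENNReal.tendsto_nhds_zero.1 (tendsto_eLpNorm_convolution_normed_sub_of_continuous
    (μ := μ) hg hgc (zero_lt_one.trans_le hq).ne' ENNReal.ofReal_ne_top hφ) _ hε3] with a ha
  have hexists {w : E → ℝ} (hw : LocallyIntegrable w μ) :
      ConvolutionExists ((φ a).normed μ) w (lsmul ℝ ℝ) μ :=
    (φ a).hasCompactSupport_normed.convolutionExists_left _ (φ a).continuous_normed hw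
  have hsplit : ((φ a).normed μ ⋆[lsmul ℝ ℝ, μ] k) - k =
      ((φ a).normed μ ⋆[lsmul ℝ ℝ, μ] (k - g)) +
        (((φ a).normed μ ⋆[lsmul ℝ ℝ, μ] g) - g) - (k - g) := by
    conv_lhs => rw [← sub_add_cancel k g, (hexists hkgl).distrib_add (hexists hgl)]
    abel
  have hm := (contDiff_convolution_normed (φ a) hkgl).continuous.aestronglyMeasurable (μ := μ)
  have hm' := ((contDiff_convolution_normed (φ a) hgl).continuous.sub hg).aestronglyMeasurable
    (μ := μ)
  rw [hsplit, ← ENNReal.add_thirds ε]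
  exact (eLpNorm_sub_le (hm.add hm') hkgm hq).trans <| add_le_add ((eLpNorm_add_le hm hm' hq).trans
    (add_le_add ((eLpNorm_convolution_normed_le (φ a) hkgm hp).trans hgk) ha)) hgk

theorem tendsto_eLpNorm_convolution_normed_sub_convolution_normed (hp : 1 ≤ p)
    (hk : MemLp k (ENNReal.ofReal p) μ) (hφ : Tendsto (fun a => (φ a).rOut) l (𝓝 0)) :
    Tendsto (fun q : ι × ι => eLpNorm (((φ q.1).normed μ ⋆[lsmul ℝ ℝ, μ] k) -
      ((φ q.2).normed μ ⋆[lsmul ℝ ℝ, μ] k)) (ENNReal.ofReal p) μ) (l ×ˢ l) (𝓝 0) := by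
  have hq : 1 ≤ ENNReal.ofReal p := ENNReal.one_le_ofReal.2 hp
  have hlim := tendsto_eLpNorm_convolution_normed_sub hp hk hφ
  have hsum := (hlim.comp tendsto_fst).add (hlim.comp tendsto_snd)
  rw [add_zero] at hsum
  refine tendsto_of_tendsto_of_tendsto_of_le_of_le tendsto_const_nhds hsum
    (fun _ => zero_le) fun q => ?_
  have hm (a : ι) : AEStronglyMeasurable (((φ a).normed μ ⋆[lsmul ℝ ℝ, μ] k) - k) μ :=
    (contDiff_convolution_normed (φ a)
      (hk.locallyIntegrable hq)).continuous.aestronglyMeasurable.sub hk.1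
  calc _ = eLpNorm ((((φ q.1).normed μ ⋆[lsmul ℝ ℝ, μ] k) - k) -
        (((φ q.2).normed μ ⋆[lsmul ℝ ℝ, μ] k) - k)) (ENNReal.ofReal p) μ := by
        rw [sub_sub_sub_cancel_right]
    _ ≤ _ := eLpNorm_sub_le (hm q.1) (hm q.2) hq

end Convergence

section WeakGradient

variable {n : ℕ} {p : ℝ} {k m w : En n → ℝ} {G : En n → En n} {v : En n}

theorem isTest_univ_normed_sub (φ : ContDiffBump (0 : En n)) (x : En n) :
    IsTest univ fun y => φ.normed volume (x - y) :=
  ⟨φ.contDiff_normed.comp (contDiff_const.sub contDiff_id),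
    φ.hasCompactSupport_normed.comp_homeomorph (Homeomorph.subLeft x), subset_univ _⟩

theorem HasWeakPartialOn.fderiv_convolution_normed (φ : ContDiffBump (0 : En n))
    (hkm : HasWeakPartialOn univ k m v) (hk : LocallyIntegrable k) (x : En n) :
    fderiv ℝ (φ.normed volume ⋆[lsmul ℝ ℝ] k) x v = (φ.normed volume ⋆[lsmul ℝ ℝ] m) x := by
  have hc : HasCompactSupport (φ.normed (volume : Measure (En n))) := φ.hasCompactSupport_normed
  have hcd : ContDiff ℝ 1 (φ.normed (volume : Measure (En n))) := φ.contDiff_normed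
  have hderiv := hc.hasFDerivAt_convolution_right (lsmul ℝ ℝ).flip hk hcd x
  have hpartial (y : En n) : fderiv ℝ (fun y => φ.normed volume (x - y)) y v =
      -fderiv ℝ (φ.normed volume) (x - y) v := by
    rw [fderiv_fun_comp y (hcd.differentiable one_ne_zero _) (by fun_prop), fderiv_const_sub]
    simp
  rw [convolution_flip] at hderiv
  rw [hderiv.fderiv, convolution_precompR_apply _ hk (hc.fderiv ℝ)
    (hcd.continuous_fderiv one_ne_zero), convolution_lsmul_swap]
  calc ∫ y, fderiv ℝ (φ.normed volume) (x - y) v * k y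
      = -∫ y, k y * fderiv ℝ (fun y => φ.normed volume (x - y)) y v := by
        rw [← integral_neg]
        simp only [hpartial, mul_neg, neg_neg, mul_comm]
    _ = ∫ y, φ.normed volume (x - y) * m y := by
        rw [hkm _ (isTest_univ_normed_sub φ x), neg_neg]
        simp only [mul_comm]

theorem norm_le_sum_abs_apply_single (L : En n →L[ℝ] ℝ) :
    ‖L‖ ≤ ∑ i, |L (EuclideanSpace.single i 1)| := by
  refine L.opNorm_le_bound (by positivity) fun x => ?_
  conv_lhs => rw [← (EuclideanSpace.basisFun (Fin n) ℝ).sum_repr x]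
  rw [map_sum, Finset.sum_mul]
  refine norm_sum_le_of_le _ fun i _ => ?_
  rw [map_smul, norm_smul, mul_comm, EuclideanSpace.basisFun_apply, EuclideanSpace.basisFun_repr]
  exact mul_le_mul_of_nonneg_left (PiLp.norm_apply_le x i) (norm_nonneg _)

theorem eLpNorm_fderiv_le_sum (u : En n → ℝ) {q : ℝ≥0∞} (hq : 1 ≤ q) (μ : Measure (En n)) :
    eLpNorm (fderiv ℝ u) q μ ≤
      ∑ i, eLpNorm (fun x => fderiv ℝ u x (EuclideanSpace.single i 1)) q μ := by
  have hm (i : Fin n) :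
      AEStronglyMeasurable (fun x => ‖fderiv ℝ u x (EuclideanSpace.single i 1)‖) μ :=
    (measurable_fderiv_apply_const ℝ u _).norm.aestronglyMeasurable
  calc eLpNorm (fderiv ℝ u) q μ
      ≤ eLpNorm (∑ i, fun x => ‖fderiv ℝ u x (EuclideanSpace.single i 1)‖) q μ :=
        eLpNorm_mono_real fun x => by
          simpa using norm_le_sum_abs_apply_single (fderiv ℝ u x)
    _ ≤ ∑ i, eLpNorm (fun x => fderiv ℝ u x (EuclideanSpace.single i 1)) q μ := by
        simpa only [eLpNorm_norm] using eLpNorm_sum_le (s := Finset.univ) (fun i _ => hm i) hq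

variable {ι : Type*} {l : Filter ι} {φ : ι → ContDiffBump (0 : En n)}

theorem MemW1p.tendsto_lintegral_enorm_fderiv_convolution_sub (hp : 1 ≤ p) (hw : MemW1p p w G)
    (hφ : Tendsto (fun a => (φ a).rOut) l (𝓝 0)) :
    Tendsto (fun q : ι × ι => ∫⁻ x, ‖fderiv ℝ (((φ q.1).normed volume ⋆[lsmul ℝ ℝ] w) -
      ((φ q.2).normed volume ⋆[lsmul ℝ ℝ] w)) x‖ₑ ^ p) (l ×ˢ l) (𝓝 0) := by
  have hp0 : 0 < p := zero_lt_one.trans_le hp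
  have hwl := (hw.locallyIntegrable hp).1
  have hpartial (q : ι × ι) (i : Fin n) :
      (fun x => fderiv ℝ (((φ q.1).normed volume ⋆[lsmul ℝ ℝ] w) -
        ((φ q.2).normed volume ⋆[lsmul ℝ ℝ] w)) x (EuclideanSpace.single i 1)) =
      ((φ q.1).normed volume ⋆[lsmul ℝ ℝ] fun x => G x i) -
        ((φ q.2).normed volume ⋆[lsmul ℝ ℝ] fun x => G x i) := by
    ext x
    have hd (a : ι) : DifferentiableAt ℝ ((φ a).normed volume ⋆[lsmul ℝ ℝ] w) x :=
      (contDiff_convolution_normed (φ a) hwl).differentiable (by simp) x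
    rw [fderiv_sub (hd q.1) (hd q.2), sub_apply, (hw.2.2.1 i).fderiv_convolution_normed _ hwl,
      (hw.2.2.1 i).fderiv_convolution_normed _ hwl, Pi.sub_apply]
  have hsum := tendsto_finsetSum Finset.univ fun i _ =>
    tendsto_eLpNorm_convolution_normed_sub_convolution_normed hp
      (memLp_apply (hw.memLp hp0).2 i) hφ
  have hpow := hsum.ennrpow_const p
  rw [Finset.sum_const_zero, ENNReal.zero_rpow_of_pos hp0] at hpow
  refine tendsto_of_tendsto_of_tendsto_of_le_of_le tendsto_const_nhds hpow
    (fun _ => zero_le) fun q => ?_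
  simp only [lintegral_enorm_rpow_eq_eLpNorm_rpow hp0, ← hpartial]
  gcongr
  exact eLpNorm_fderiv_le_sum _ (ENNReal.one_le_ofReal.2 hp) _

theorem MemW1p.tendsto_capOpen_lt_maximalFn_convolution_sub (hp : 1 ≤ p)
    (hw : MemW1p p w G) (hc : HasCompactSupport w)
    (hφ : Tendsto (fun a => (φ a).rOut) l (𝓝 0)) {t : ℝ} (ht : 0 < t) :
    Tendsto (fun q : ι × ι => capOpen p {x | ENNReal.ofReal t <
      maximalFn volume (((φ q.1).normed volume ⋆[lsmul ℝ ℝ] w) -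
        ((φ q.2).normed volume ⋆[lsmul ℝ ℝ] w)) x}) (l ×ˢ l) (𝓝 0) := by
  obtain ⟨C, hC, hcap⟩ := exists_capOpen_lt_maximalFn_le n hp
  have hconst : C * (ENNReal.ofReal (t / 2) ^ p)⁻¹ ≠ ∞ := by finiteness
  have hlim := ENNReal.Tendsto.const_mul
    (hw.tendsto_lintegral_enorm_fderiv_convolution_sub hp hφ) (.inr hconst)
  rw [mul_zero] at hlim
  refine tendsto_of_tendsto_of_tendsto_of_le_of_le tendsto_const_nhds hlim
    (fun _ => zero_le) fun q => hcap ?_ ?_ ht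
  · have hcd (a : ι) := contDiff_convolution_normed (φ a) (hw.locallyIntegrable hp).1
    exact ((hcd q.1).sub (hcd q.2)).of_le (by simp)
  · have hcs (a : ι) : HasCompactSupport ((φ a).normed volume ⋆[lsmul ℝ ℝ] w) :=
      (φ a).hasCompactSupport_normed.convolution _ hc
    exact (hcs q.1).sub (hcs q.2)

end WeakGradient

end Mollification

/-! ### Pointwise limits off sets of small capacity -/

section MaximalLimit

variable {E F : Type*} [PseudoMetricSpace E] [MeasurableSpace E] [NormedAddCommGroup F]
  {μ : Measure E} {u : ℕ → E → F} {v : E → F} {x : E} {a : ℕ → ℝ≥0∞}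

theorem maximalFn_add_sub_le_tsum (hu : ∀ k, AEStronglyMeasurable (u k) μ)
    (ha : ∀ j, maximalFn μ (u (j + 1) - u j) x ≤ a j) (j m : ℕ) :
    maximalFn μ (u (m + j) - u j) x ≤ ∑' i, a (i + j) := by
  have htel : u (m + j) - u j = ∑ i ∈ Finset.range m, (u (i + j + 1) - u (i + j)) := by
    simpa only [zero_add, add_right_comm] using
      (Finset.sum_range_sub (fun i => u (i + j)) m).symm
  calc maximalFn μ (u (m + j) - u j) x
      ≤ ∑ i ∈ Finset.range m, maximalFn μ (u (i + j + 1) - u (i + j)) x := by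
        rw [htel]
        exact maximalFn_sum_le _ fun i _ => (hu _).sub (hu _)
    _ ≤ ∑ i ∈ Finset.range m, a (i + j) := Finset.sum_le_sum fun i _ => ha _
    _ ≤ ∑' i, a (i + j) := ENNReal.sum_le_tsum _

theorem maximalFn_le_of_tendsto_eLpNorm {q c : ℝ≥0∞} (hq : q ≠ 0)
    (hu : ∀ k, AEStronglyMeasurable (u k) μ) (hv : AEStronglyMeasurable v μ)
    (hlim : Tendsto (fun k => eLpNorm (u k - v) q μ) atTop (𝓝 0))
    (hc : ∀ k, maximalFn μ (u k) x ≤ c) : maximalFn μ v x ≤ c := by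
  obtain ⟨s, -, hs⟩ := (tendstoInMeasure_of_tendsto_eLpNorm hq hu hv hlim).exists_seq_tendsto_ae
  refine iSup₂_le fun r hr => ?_
  have hliminf : ∀ᵐ y ∂(μ.restrict (ball x r) univ)⁻¹ • μ.restrict (ball x r),
      ‖v y‖ₑ = liminf (fun k => ‖u (s k) y‖ₑ) atTop :=
    Measure.ae_smul_measure (ae_restrict_of_ae (hs.mono fun y hy => hy.enorm.liminf_eq.symm)) _
  calc ⨍⁻ y in ball x r, ‖v y‖ₑ ∂μ
      = ⨍⁻ y in ball x r, liminf (fun k => ‖u (s k) y‖ₑ) atTop ∂μ := lintegral_congr_ae hliminf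
    _ ≤ liminf (fun k => ⨍⁻ y in ball x r, ‖u (s k) y‖ₑ ∂μ) atTop :=
        lintegral_liminf_le' fun k => (hu (s k)).enorm.restrict.smul_measure _
    _ ≤ c := liminf_le_of_le (by isBoundedDefault) fun b hb =>
        let ⟨k, hk⟩ := hb.exists
        hk.trans ((laverage_le_maximalFn hr).trans (hc (s k)))

theorem maximalFn_sub_le_tsum_of_tendsto_eLpNorm {q : ℝ≥0∞} (hq : q ≠ 0)
    (hu : ∀ k, AEStronglyMeasurable (u k) μ) (hv : AEStronglyMeasurable v μ)
    (hlim : Tendsto (fun k => eLpNorm (u k - v) q μ) atTop (𝓝 0))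
    (ha : ∀ j, maximalFn μ (u (j + 1) - u j) x ≤ a j) (j : ℕ) :
    maximalFn μ (v - u j) x ≤ ∑' i, a (i + j) := by
  refine maximalFn_le_of_tendsto_eLpNorm hq (fun m => (hu (m + j)).sub (hu j)) (hv.sub (hu j)) ?_
    fun m => maximalFn_add_sub_le_tsum hu ha j m
  simpa only [sub_sub_sub_cancel_right] using (tendsto_add_atTop_iff_nat j).2 hlim

variable [ProperSpace E] [OpensMeasurableSpace E] [IsLocallyFiniteMeasure μ] [μ.IsOpenPosMeasure]
  [NormedSpace ℝ F] [CompleteSpace F]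

theorem enorm_average_ball_sub_le_maximalFn_sub_add {w : E → F} (hw : Continuous w)
    (hv : LocallyIntegrable v μ) {r : ℝ} (hr : 0 < r) {c : ℝ≥0∞} {ℓ : F}
    (hwc : ∀ y ∈ ball x r, ‖w y - ℓ‖ₑ ≤ c) :
    ‖(⨍ y in ball x r, v y ∂μ) - ℓ‖ₑ ≤ maximalFn μ (v - w) x + c := by
  have hfin : μ (ball x r) ≠ ∞ := measure_ball_lt_top.ne
  have hpos : μ (ball x r) ≠ 0 := (measure_ball_pos μ x hr).ne'
  have : IsFiniteMeasure (μ.restrict (ball x r)) := isFiniteMeasure_restrict.2 hfin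
  have : NeZero (μ.restrict (ball x r)) := ⟨by simpa using hpos⟩
  have hint : IntegrableOn v (ball x r) μ :=
    (hv.integrableOn_isCompact (isCompact_closedBall x r)).mono_set ball_subset_closedBall
  have hmeas : Measurable fun y => ‖w y - ℓ‖ₑ := (hw.sub continuous_const).enorm.measurable
  calc ‖(⨍ y in ball x r, v y ∂μ) - ℓ‖ₑ
      ≤ ⨍⁻ y in ball x r, ‖v y - ℓ‖ₑ ∂μ := enorm_average_sub_le hint ℓ
    _ ≤ ⨍⁻ y in ball x r, (‖v y - w y‖ₑ + ‖w y - ℓ‖ₑ) ∂μ := by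
        simp only [← edist_eq_enorm_sub]
        exact lintegral_mono fun y => edist_triangle _ _ _
    _ = ⨍⁻ y in ball x r, ‖v y - w y‖ₑ ∂μ + ⨍⁻ y in ball x r, ‖w y - ℓ‖ₑ ∂μ :=
        lintegral_add_right' _ hmeas.aemeasurable
    _ ≤ maximalFn μ (v - w) x + c := by
        refine add_le_add (laverage_le_maximalFn (u := v - w) hr) ?_
        rw [← setLAverage_const hpos hfin c, setLAverage_eq, setLAverage_eq]
        gcongr ?_ / _
        exact setLIntegral_mono' measurableSet_ball hwc

theorem tendsto_average_ball_of_tendsto_maximalFn_sub (hu : ∀ k, Continuous (u k))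
    (hv : LocallyIntegrable v μ) {ℓ : F} (hℓ : Tendsto (fun k => u k x) atTop (𝓝 ℓ))
    (hM : Tendsto (fun k => maximalFn μ (v - u k) x) atTop (𝓝 0)) :
    Tendsto (fun r => ⨍ y in ball x r, v y ∂μ) (𝓝[>] 0) (𝓝 ℓ) := by
  refine tendsto_iff_edist_tendsto_0.2 (ENNReal.tendsto_nhds_zero.2 fun ε hε => ?_)
  have hε2 : 0 < ε / 2 := ENNReal.half_pos hε.ne'
  obtain ⟨k, hMk, hℓk⟩ := ((hM.eventually (gt_mem_nhds hε2)).and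
    (hℓ.eventually (eball_mem_nhds ℓ hε2))).exists
  obtain ⟨ρ, hρ0, hρ⟩ := eventually_nhds_iff_ball.1
    ((hu k).continuousAt.eventually (isOpen_eball.mem_nhds hℓk))
  filter_upwards [Ioo_mem_nhdsGT hρ0] with r hr
  rw [edist_eq_enorm_sub, ← ENNReal.add_halves ε]
  refine (enorm_average_ball_sub_le_maximalFn_sub_add (hu k) hv hr.1 fun y hy => ?_).trans
    (add_le_add_left hMk.le _)
  rw [← edist_eq_enorm_sub]
  exact (hρ y (ball_subset_ball hr.2.le hy)).le

end MaximalLimit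

section PreciseRep

variable {n : ℕ} {f F : En n → ℝ} {x : En n} {ℓ : ℝ}

theorem preciseRep_eq_of_tendsto (h : Tendsto (fun r => ballAvg f x r) (𝓝[>] 0) (𝓝 ℓ)) :
    preciseRep f x = ℓ := by
  have hex : ∃ L, Tendsto (fun r => ballAvg f x r) (𝓝[>] 0) (𝓝 L) := ⟨ℓ, h⟩
  rw [preciseRep, dif_pos hex]
  exact tendsto_nhds_unique hex.choose_spec h

theorem ballAvg_eventuallyEq (h : f =ᶠ[𝓝 x] F) :
    (fun r => ballAvg f x r) =ᶠ[𝓝[>] 0] fun r => ballAvg F x r := by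
  obtain ⟨ρ, hρ0, hρ⟩ := eventually_nhds_iff_ball.1 h
  filter_upwards [Ioo_mem_nhdsGT hρ0] with r hr
  exact setAverage_congr_fun measurableSet_ball
    (ae_of_all _ fun y hy => hρ y (ball_subset_ball hr.2.le hy))

end PreciseRep

section Lipschitz

variable {E F : Type*} [NormedAddCommGroup E] [NormedSpace ℝ E] [FiniteDimensional ℝ E]
  [MeasurableSpace E] [BorelSpace E] {μ : Measure E} [μ.IsAddHaarMeasure]
  [NormedAddCommGroup F] [NormedSpace ℝ F] [CompleteSpace F]

theorem lipschitzOnWith_of_maximalFn_fderiv_le {u : E → F} (hu : ContDiff ℝ 1 u) {s : Set E}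
    {c : ℝ≥0} (hc : ∀ x ∈ s, maximalFn μ (fderiv ℝ u) x ≤ c) :
    LipschitzOnWith (2 ^ (Module.finrank ℝ E + 1) * c) u s := fun x hx y hy =>
  calc edist (u x) (u y)
      ≤ 2 ^ Module.finrank ℝ E * edist x y *
          (maximalFn μ (fderiv ℝ u) x + maximalFn μ (fderiv ℝ u) y) := by
        rw [edist_eq_enorm_sub]
        exact enorm_sub_le_edist_mul_maximalFn_fderiv hu x y
    _ ≤ 2 ^ Module.finrank ℝ E * edist x y * (c + c) := by gcongr <;> exact hc _ ‹_›
    _ = _ := by push_cast; ring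

end Lipschitz

theorem lipschitzOnWith_of_tendsto {α β ι : Type*} [PseudoEMetricSpace α] [PseudoEMetricSpace β]
    {l : Filter ι} [l.NeBot] {u : ι → α → β} {v : α → β} {s : Set α} {K : ℝ≥0}
    (hu : ∀ a, LipschitzOnWith K (u a) s) (hv : ∀ x ∈ s, Tendsto (fun a => u a x) l (𝓝 (v x))) :
    LipschitzOnWith K v s := fun x hx y hy =>
  le_of_tendsto' ((hv x hx).edist (hv y hy)) fun a => hu a hx hy

theorem maximalFn_fderiv_le_sum {n : ℕ} {μ : Measure (En n)} (u : En n → ℝ) (x : En n) :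
    maximalFn μ (fderiv ℝ u) x ≤
      ∑ i, maximalFn μ (fun y => fderiv ℝ u y (EuclideanSpace.single i 1)) x := by
  have hm (i : Fin n) :
      AEStronglyMeasurable (fun y => ‖fderiv ℝ u y (EuclideanSpace.single i 1)‖) μ :=
    (measurable_fderiv_apply_const ℝ u _).norm.aestronglyMeasurable
  calc maximalFn μ (fderiv ℝ u) x
      ≤ maximalFn μ (∑ i, fun y => ‖fderiv ℝ u y (EuclideanSpace.single i 1)‖) x := by
        refine maximalFn_mono fun y => enorm_le_iff_norm_le.2 ?_
        rw [Finset.sum_apply]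
        exact (norm_le_sum_abs_apply_single _).trans (le_abs_self _)
    _ ≤ ∑ i, maximalFn μ (fun y => ‖fderiv ℝ u y (EuclideanSpace.single i 1)‖) x :=
        maximalFn_sum_le _ fun i _ => hm i
    _ ≤ _ := Finset.sum_le_sum fun i _ => maximalFn_mono fun y => (enorm_norm _).le

section SobolevLimit

open ContinuousLinearMap Convolution

variable {n : ℕ} {p : ℝ} {φ : ℕ → ContDiffBump (0 : En n)}

theorem exists_capOpen_le_forall_maximalFn_convolution_sub_le {ι : Type*} [Finite ι] (hp : 1 ≤ p)
    {w : ι → En n → ℝ} {G : ι → En n → En n} (hw : ∀ o, MemW1p p (w o) (G o))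
    (hc : ∀ o, HasCompactSupport (w o)) (hφ : Tendsto (fun k => (φ k).rOut) atTop (𝓝 0))
    {δ : ℕ → ℝ≥0} (hδ : ∀ j, 0 < δ j) {ε : ℝ≥0∞} (hε : ε ≠ 0) :
    ∃ s : ℕ → ℕ, StrictMono s ∧ ∃ U, IsOpen U ∧ capOpen p U ≤ ε ∧ ∀ x ∉ U, ∀ o j,
      maximalFn volume (((φ (s (j + 1))).normed volume ⋆[lsmul ℝ ℝ] w o) -
        ((φ (s j)).normed volume ⋆[lsmul ℝ ℝ] w o)) x ≤ δ j := by
  obtain ⟨η, hη, hηε⟩ := ENNReal.exists_pos_sum_of_countable' hε (ι × ℕ)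
  let bad (o : ι) (j a b : ℕ) : Set (En n) := {x | ENNReal.ofReal (δ j) <
    maximalFn volume (((φ a).normed volume ⋆[lsmul ℝ ℝ] w o) -
      ((φ b).normed volume ⋆[lsmul ℝ ℝ] w o)) x}
  have hsmall (j : ℕ) : ∀ᶠ N in atTop, ∀ a ≥ N, ∀ b ≥ N, ∀ o,
      capOpen p (bad o j a b) ≤ η (o, j) := by
    have hev : ∀ᶠ q in (atTop : Filter ℕ) ×ˢ atTop, ∀ o,
        capOpen p (bad o j q.1 q.2) ≤ η (o, j) :=
      eventually_all.2 fun o => ((hw o).tendsto_capOpen_lt_maximalFn_convolution_sub hp (hc o) hφ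
        (NNReal.coe_pos.2 (hδ j))).eventually (ge_mem_nhds (hη (o, j)))
    rw [prod_atTop_atTop_eq] at hev
    obtain ⟨N, hN⟩ := eventually_atTop_prod_self.1 hev
    filter_upwards [eventually_ge_atTop N] with N' hN' a ha b hb
    exact hN a b (hN'.trans ha) (hN'.trans hb)
  obtain ⟨s, hs, hcap⟩ := extraction_forall_of_eventually hsmall
  have hopen (q : ι × ℕ) : IsOpen (bad q.1 q.2 (s (q.2 + 1)) (s q.2)) := isOpen_lt_maximalFn _ _
  refine ⟨s, hs, ⋃ q : ι × ℕ, bad q.1 q.2 (s (q.2 + 1)) (s q.2), isOpen_iUnion hopen, ?_,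
    fun x hx o j => ?_⟩
  · calc _ ≤ ∑' q : ι × ℕ, capOpen p (bad q.1 q.2 (s (q.2 + 1)) (s q.2)) :=
          capOpen_iUnion_le hp hopen
      _ ≤ ∑' q, η q := ENNReal.tsum_le_tsum fun q =>
          hcap q.2 _ (hs (Nat.lt_succ_self _)).le _ le_rfl q.1
      _ ≤ ε := hηε.le
  · rw [← ENNReal.ofReal_coe_nnreal]
    exact not_lt.1 fun hlt => hx (mem_iUnion_of_mem (o, j) hlt)

theorem MemW1p.tendsto_convolution_and_tendsto_ballAvg (hp : 1 ≤ p) {w : En n → ℝ}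
    {G : En n → En n} (hw : MemW1p p w G) (hφ : Tendsto (fun k => (φ k).rOut) atTop (𝓝 0))
    {a : ℕ → ℝ≥0∞} (ha : ∑' j, a j ≠ ∞) {x : En n}
    (hM : ∀ j, maximalFn volume (((φ (j + 1)).normed volume ⋆[lsmul ℝ ℝ] w) -
      ((φ j).normed volume ⋆[lsmul ℝ ℝ] w)) x ≤ a j) :
    Tendsto (fun j => ((φ j).normed volume ⋆[lsmul ℝ ℝ] w) x) atTop (𝓝 (preciseRep w x)) ∧
      Tendsto (fun r => ballAvg w x r) (𝓝[>] 0) (𝓝 (preciseRep w x)) := by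
  set u : ℕ → En n → ℝ := fun j => (φ j).normed volume ⋆[lsmul ℝ ℝ] w
  have hwl := (hw.locallyIntegrable hp).1
  have hu (j : ℕ) : Continuous (u j) := (contDiff_convolution_normed (φ j) hwl).continuous
  have hp0 : 0 < p := zero_lt_one.trans_le hp
  have hwp := (hw.memLp hp0).1
  have hMlim : Tendsto (fun j => maximalFn volume (w - u j) x) atTop (𝓝 0) :=
    tendsto_of_tendsto_of_tendsto_of_le_of_le tendsto_const_nhds (ENNReal.tendsto_sum_nat_add a ha)
      (fun _ => zero_le) <| maximalFn_sub_le_tsum_of_tendsto_eLpNorm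
        (ENNReal.ofReal_pos.2 hp0).ne' (fun j => (hu j).aestronglyMeasurable) hwp.1
        (tendsto_eLpNorm_convolution_normed_sub hp hwp hφ) hM
  obtain ⟨ℓ, hℓ⟩ : ∃ ℓ, Tendsto (fun j => u j x) atTop (𝓝 ℓ) := by
    refine cauchySeq_tendsto_of_complete (cauchySeq_of_edist_le_of_tsum_ne_top a (fun j => ?_) ha)
    rw [edist_comm, edist_eq_enorm_sub]
    exact (enorm_le_maximalFn ((hu (j + 1)).sub (hu j)).continuousAt).trans (hM j)
  have hball : Tendsto (fun r => ballAvg w x r) (𝓝[>] 0) (𝓝 ℓ) :=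
    tendsto_average_ball_of_tendsto_maximalFn_sub hu hwl hℓ hMlim
  rw [preciseRep_eq_of_tendsto hball]
  exact ⟨hℓ, hball⟩

theorem MemW1p.exists_forall_maximalFn_convolution_le (hp : 1 ≤ p) {w : En n → ℝ}
    {G : En n → En n} (hw : MemW1p p w G) (hc : HasCompactSupport w)
    (φ : ℕ → ContDiffBump (0 : En n)) {a : ℕ → ℝ≥0∞} (ha : ∑' j, a j ≠ ∞) :
    ∃ c : ℝ≥0, ∀ x, (∀ j, maximalFn volume (((φ (j + 1)).normed volume ⋆[lsmul ℝ ℝ] w) -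
      ((φ j).normed volume ⋆[lsmul ℝ ℝ] w)) x ≤ a j) →
        ∀ j, maximalFn volume ((φ j).normed volume ⋆[lsmul ℝ ℝ] w) x ≤ c := by
  set u : ℕ → En n → ℝ := fun j => (φ j).normed volume ⋆[lsmul ℝ ℝ] w
  have hu (j : ℕ) : Continuous (u j) :=
    (contDiff_convolution_normed (φ j) (hw.locallyIntegrable hp).1).continuous
  obtain ⟨b, hb⟩ := ((φ 0).hasCompactSupport_normed.convolution (lsmul ℝ ℝ)
    hc).exists_bound_of_continuous (hu 0)
  refine ⟨(∑' j, a j).toNNReal + b.toNNReal, fun x hM j => ?_⟩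
  have hm (j : ℕ) : AEStronglyMeasurable (u j) := (hu j).aestronglyMeasurable
  calc maximalFn volume (u j) x
      = maximalFn volume ((u j - u 0) + u 0) x := by rw [sub_add_cancel]
    _ ≤ maximalFn volume (u j - u 0) x + maximalFn volume (u 0) x :=
        maximalFn_add_le ((hm j).sub (hm 0))
    _ ≤ ∑' j, a j + ENNReal.ofReal b :=
        add_le_add (maximalFn_add_sub_le_tsum hm hM 0 j) <| maximalFn_le_of_enorm_le fun y => by
          rw [← ofReal_norm]
          exact ENNReal.ofReal_le_ofReal (hb y)
    _ = _ := by rw [ENNReal.coe_add, ENNReal.coe_toNNReal ha]; rfl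

theorem MemW1p.exists_lipschitzOnWith_preciseRep (hp : 1 ≤ p) {F : En n → ℝ} {G : En n → En n}
    {H : Fin n → En n → En n} (hF : MemW1p p F G) (hG : ∀ i, MemW1p p (fun x => G x i) (H i))
    (hFc : HasCompactSupport F) (hGc : HasCompactSupport G) {ε : ℝ≥0∞} (hε : ε ≠ 0) :
    ∃ U, IsOpen U ∧ capOpen p U ≤ ε ∧
      (∀ x ∉ U, Tendsto (fun r => ballAvg F x r) (𝓝[>] 0) (𝓝 (preciseRep F x))) ∧
      ∃ L, LipschitzOnWith L (preciseRep F) Uᶜ := by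
  have hGic (i : Fin n) : HasCompactSupport fun x => G x i :=
    hGc.comp_left (g := fun v : En n => v i) rfl
  let φ (k : ℕ) : ContDiffBump (0 : En n) :=
    ⟨1 / (k + 1) / 2, 1 / (k + 1), by positivity, half_lt_self (by positivity)⟩
  obtain ⟨δ, hδ, hδ1⟩ := ENNReal.exists_pos_sum_of_countable one_ne_zero ℕ
  obtain ⟨s, hs, U, hU, hUε, hM⟩ := exists_capOpen_le_forall_maximalFn_convolution_sub_le
    (ι := Option (Fin n)) (w := fun o => o.elim F fun i x => G x i) (G := fun o => o.elim G H)
    hp (Option.forall.2 ⟨hF, hG⟩) (Option.forall.2 ⟨hFc, hGic⟩)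
    (φ := φ) tendsto_one_div_add_atTop_nhds_zero_nat hδ hε
  have hψ : Tendsto (fun j => (φ (s j)).rOut) atTop (𝓝 0) :=
    tendsto_one_div_add_atTop_nhds_zero_nat.comp hs.tendsto_atTop
  have hlim (x) (hx : x ∉ U) :=
    hF.tendsto_convolution_and_tendsto_ballAvg hp hψ hδ1.ne_top (hM x hx none)
  choose c hc using fun i =>
    (hG i).exists_forall_maximalFn_convolution_le hp (hGic i) (fun j => φ (s j)) hδ1.ne_top
  have hFl := (hF.locallyIntegrable hp).1
  have hgrad (j : ℕ) : ∀ x ∈ Uᶜ, maximalFn volume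
      (fderiv ℝ ((φ (s j)).normed volume ⋆[lsmul ℝ ℝ] F)) x ≤ (∑ i, c i : ℝ≥0) := fun x hx => by
    refine (maximalFn_fderiv_le_sum _ x).trans ?_
    simp only [(hF.2.2.1 _).fderiv_convolution_normed _ hFl]
    push_cast
    exact Finset.sum_le_sum fun i _ => hc i x (hM x hx (some i)) j
  exact ⟨U, hU, hUε, fun x hx => (hlim x hx).2, _, lipschitzOnWith_of_tendsto
    (fun j => lipschitzOnWith_of_maximalFn_fderiv_le
      ((contDiff_convolution_normed (φ (s j)) hFl).of_le (by simp)) (hgrad j))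
    fun x hx => (hlim x hx).1⟩

theorem MemW2pLoc.exists_lipschitzOnWith_preciseRep_sdiff (hp : 1 ≤ p) {Ω : Set (En n)}
    (hΩ : IsOpen Ω) {f : En n → ℝ} {g : En n → En n} {h : En n → Fin n → En n}
    (hf : MemW2pLoc p Ω f g h) {K : Set (En n)} (hK : IsCompact K) (hKΩ : K ⊆ Ω) {ε : ℝ≥0∞}
    (hε : ε ≠ 0) :
    ∃ U, IsOpen U ∧ capOpen p U ≤ ε ∧ ∃ L, LipschitzOnWith L (preciseRep f) (K \ U) := by
  obtain ⟨χ, hχ, hχ1⟩ := exists_isTest_eventually_eq_one hK hΩ hKΩ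
  obtain ⟨G, H, hF, hG, hGc⟩ := hf.exists_memW1p_mul hp hΩ hχ
  obtain ⟨U, hU, hUε, hlim, L, hL⟩ :=
    hF.exists_lipschitzOnWith_preciseRep hp hG hχ.2.1.mul_right hGc hε
  have heq : EqOn (preciseRep f) (preciseRep fun x => χ x * f x) (K \ U) := fun x hx =>
    preciseRep_eq_of_tendsto <| (hlim x hx.2).congr' <| ballAvg_eventuallyEq <|
      (hχ1 x hx.1).mono fun y hy => by simp [hy]
  refine ⟨U, hU, hUε, L, fun x hx y hy => ?_⟩
  rw [heq hx, heq hy]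
  exact hL hx.2 hy.2

end SobolevLimit

theorem exists_isClosed_cap_sdiff_iUnion_eq_zero {n : ℕ} {p : ℝ} (hp : 1 ≤ p) {Ω : Set (En n)}
    (hΩ : IsOpen Ω) {P : Set (En n) → Prop} (hP : ∀ ⦃A B⦄, A ⊆ B → P B → P A)
    (hK : ∀ K ⊆ Ω, IsCompact K → ∀ ε ≠ 0, ∃ U, IsOpen U ∧ capOpen p U ≤ ε ∧ P (K \ U)) :
    ∃ C : ℕ → Set (En n), (∀ k, IsClosed (C k)) ∧ (∀ k, C k ⊆ C (k + 1)) ∧ (∀ k, C k ⊆ Ω) ∧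
      (∀ k, P (C k)) ∧ cap p (Ω \ ⋃ k, C k) = 0 := by
  obtain ⟨K, hKc, hKm, rfl⟩ := exists_monotone_isCompact_iUnion_eq hΩ
  obtain ⟨ε, hε, hε1⟩ := ENNReal.exists_pos_sum_of_countable' one_ne_zero ℕ
  choose U hUo hUε hUP using fun k => hK (K k) (subset_iUnion K k) (hKc k) (ε k) (hε k).ne'
  let T (k : ℕ) : Set (En n) := ⋃ j, U (j + k)
  have hTo (k : ℕ) : IsOpen (T k) := isOpen_iUnion fun j => hUo _
  have hT : Antitone T := fun k l hkl => iUnion_subset fun j =>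
    subset_iUnion_of_subset (j + (l - k)) (by rw [add_assoc, Nat.sub_add_cancel hkl])
  have hcover (m : ℕ) : (⋃ k, K k) \ ⋃ k, K k \ T k ⊆ T m := by
    rintro x ⟨hx, hxC⟩
    obtain ⟨k, hxk⟩ := mem_iUnion.1 hx
    by_contra hxT
    exact hxC (mem_iUnion_of_mem (max k m)
      ⟨hKm (le_max_left k m) hxk, fun hxT' => hxT (hT (le_max_right k m) hxT')⟩)
  refine ⟨fun k => K k \ T k, fun k => (hKc k).isClosed.sdiff (hTo k),
    fun k => sdiff_subset_sdiff (hKm k.le_succ) (hT k.le_succ),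
    fun k => sdiff_subset.trans (subset_iUnion K k), fun k => ?_, le_antisymm ?_ zero_le⟩
  · exact hP (sdiff_subset_sdiff_right (subset_iUnion_of_subset 0 (by rw [zero_add]))) (hUP k)
  · refine ge_of_tendsto' (ENNReal.tendsto_sum_nat_add ε hε1.ne_top) fun m => ?_
    calc _ ≤ capOpen p (T m) := cap_le_capOpen (hcover m) (hTo m)
      _ ≤ ∑' j, capOpen p (U (j + m)) := capOpen_iUnion_le hp fun j => hUo _
      _ ≤ ∑' j, ε (j + m) := ENNReal.tsum_le_tsum fun j => hUε _

/-- Lipschitz approximation of `W^{2,p}_loc(Ω)` functions up to sets of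
`p`-capacity zero. -/
theorem lipschitz_approx_W2p {n : ℕ} (Ω : Set (En n)) (hΩ : IsOpen Ω)
    (p : ℝ) (hp : 1 ≤ p)
    (f : En n → ℝ) (g : En n → En n) (h : En n → Fin n → En n)
    (hf : MemW2pLoc p Ω f g h) :
    ∃ C : ℕ → Set (En n),
      (∀ k, IsClosed (C k)) ∧ (∀ k, C k ⊆ C (k + 1)) ∧ (∀ k, C k ⊆ Ω) ∧
      (∀ k, LipschitzOnQE p (preciseRep f) (C k)) ∧
      cap p (Ω \ ⋃ k, C k) = 0 := by
  obtain ⟨C, hclosed, hmono, hsub, hlip, hcap⟩ := exists_isClosed_cap_sdiff_iUnion_eq_zero hp hΩ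
    (P := fun A => ∃ L, LipschitzOnWith L (preciseRep f) A)
    (fun A B hAB ⟨L, hL⟩ => ⟨L, hL.mono hAB⟩)
    fun K hKΩ hK ε hε => hf.exists_lipschitzOnWith_preciseRep_sdiff hp hΩ hK hKΩ hε
  refine ⟨C, hclosed, hmono, hsub, fun k => ?_, hcap⟩
  obtain ⟨L, hL⟩ := hlip k
  exact ⟨∅, empty_subset _, cap_empty (zero_lt_one.trans_le hp), L, by rwa [sdiff_empty]⟩
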